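/- Let 𝓕 be a ratio-sharp EKR-set of chambers, let s ∈ [n] and let S be a totally isotropic s-space. Set X = #{C ∈ 𝓕 : C_s = S}, Y = #{C ∈ 𝓕 : S ∩ C_s^⊥ = {0}}, Z = #{C ∈ 𝓕 : C_s ≠ S and S ∩ C_s^⊥ ≠ {0}}, E = 2ns − s(3s−1)/2 − n and D = s(s−1)/2 + (n−s)². Then: (a) Y = q^E · (z_s · z_{n−s} · Φ_s^n − X); (b) if S is heavy, then X = z_s · z_{n−s} · Φ_s^n and Z = Φ_1^n · z_n − z_s · z_{n−s} · Φ_s^n; (c) if S is light, then X ≤ z_s · z_{n−s} · Φ_s^n − q^D and Z ≤ Φ_1^n · z_n − z_s · z_{n−s} · Φ_s^n − (q^E − 1) · q^D. -/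

import Mathlib

open scoped Classical

open Module

section Defs

variable {F V : Type} [Field F] [AddCommGroup V] [Module F V]

/-- The orthogonal complement of a subspace with respect to a bilinear form. -/
def bperp (B : V →ₗ[F] V →ₗ[F] F) (W : Submodule F V) : Submodule F V :=
  ⨅ w ∈ W, LinearMap.ker (B w)

/-- A subspace is totally isotropic for `B`. -/
def IsTotIso (B : V →ₗ[F] V →ₗ[F] F) (W : Submodule F V) : Prop :=
  ∀ u ∈ W, ∀ w ∈ W, B u w = 0

/-- `B` is an alternating form. -/
def IsAltForm (B : V →ₗ[F] V →ₗ[F] F) : Prop := ∀ v, B v v = 0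

/-- `B` is nondegenerate. -/
def NondegForm (B : V →ₗ[F] V →ₗ[F] F) : Prop := ∀ v, (∀ w, B v w = 0) → v = 0

/-- A flag of type `J` of totally isotropic subspaces: entries outside `J` are `⊥`. -/
structure SFlag (B : V →ₗ[F] V →ₗ[F] F) (J : Finset ℕ) where
  space : ℕ → Submodule F V
  isotropic : ∀ i ∈ J, IsTotIso B (space i)
  finrank_eq : ∀ i ∈ J, Module.finrank F (space i) = i
  mono : ∀ i ∈ J, ∀ j ∈ J, i ≤ j → space i ≤ space j
  eq_bot : ∀ i, i ∉ J → space i = ⊥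

/-- Two flags of type `J` are opposite. -/
def FlagOpp {B : V →ₗ[F] V →ₗ[F] F} {J : Finset ℕ} (C C' : SFlag B J) : Prop :=
  ∀ i ∈ J, bperp B (C.space i) ⊓ C'.space i = ⊥

/-- An EKR-set of flags of type `J`: no two members are opposite. -/
def IsEKRFlags {B : V →ₗ[F] V →ₗ[F] F} {J : Finset ℕ} (𝓕 : Set (SFlag B J)) : Prop :=
  ∀ C ∈ 𝓕, ∀ C' ∈ 𝓕, ¬ FlagOpp C C'

/-- Two subspaces are opposite. -/
def SpaceOpp (B : V →ₗ[F] V →ₗ[F] F) (S T : Submodule F V) : Prop :=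
  bperp B S ⊓ T = ⊥

/-- An EKR-set of totally isotropic `s`-spaces: no two members are opposite. -/
def IsEKRSpaces (B : V →ₗ[F] V →ₗ[F] F) (s : ℕ) (𝓕 : Set (Submodule F V)) : Prop :=
  (∀ S ∈ 𝓕, IsTotIso B S ∧ Module.finrank F S = s) ∧
    ∀ S ∈ 𝓕, ∀ T ∈ 𝓕, ¬ SpaceOpp B S T

/-- An `s`-space `S` is heavy with respect to a set `𝓕` of flags: every flag whose
`s`-th entry equals `S` belongs to `𝓕`. -/
def Heavy {B : V →ₗ[F] V →ₗ[F] F} {J : Finset ℕ} (𝓕 : Set (SFlag B J)) (s : ℕ)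
    (S : Submodule F V) : Prop :=
  ∀ C : SFlag B J, C.space s = S → C ∈ 𝓕

end Defs

/-- `z_k = ∏_{i=1}^k (q^i-1)/(q-1)`. -/
noncomputable def zpol (q k : ℕ) : ℝ :=
  ∏ i ∈ Finset.Icc 1 k, ((q : ℝ) ^ i - 1) / ((q : ℝ) - 1)

/-- The Gaussian binomial coefficient `[m choose k]_q` as a real number. -/
noncomputable def gaussq (q m k : ℕ) : ℝ :=
  ∏ i ∈ Finset.Icc 1 k, ((q : ℝ) ^ (m - k + i) - 1) / ((q : ℝ) ^ i - 1)

/-- `Φ_m^s` in `PS(n,1,q)`: the number of totally isotropic `s`-spaces containing a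
fixed totally isotropic `m`-space. -/
noncomputable def PhiP (q n m s : ℕ) : ℝ :=
  gaussq q (n - m) (s - m) * ∏ i ∈ Finset.Icc 1 (s - m), ((q : ℝ) ^ (n - m + 1 - i) + 1)

/-!
Let `T_j` be the `0`-`1` matrix of the relation "`C` and `D` differ at most in their `j`-th entry"
minus the identity. The `T_j` satisfy the Hecke relation `T² = (q - 1) T + q`, and with
`t_i = T_{n-i}` the matrix `A` of opposition is the product of the Jucys–Murphy elements
`L_0 = t_0`, `L_{k+1} = t_{k+1} L_k t_{k+1}`: the partial product `L_0 ⋯ L_{k-1}` is the matrix of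
"equal on the first `n - k` entries and opposite above", which commutes with every
`t_i`, `i < k`. Bounding the joint eigenvalues of the commuting `L_k` shows that the smallest
eigenvalue of `A` is at least `-q^{n(n-1)}`.

A ratio-sharp EKR-set `𝓕` attains the resulting ratio bound, so every chamber outside `𝓕` is
opposite to exactly `q^{n(n-1)}` members of `𝓕`. Counting the opposite pairs between `𝓕` and the
chambers through `S` outside `𝓕` in two ways gives `Y`, and `Z` is what remains.
-/

/-! ### Jucys–Murphy elements -/

section JucysMurphy

variable {M R R' : Type*} [Monoid R] [Monoid R'] [FunLike M R R']

/-- The Jucys–Murphy elements `t₀`, `t₁ t₀ t₁`, `t₂ t₁ t₀ t₁ t₂`, … of a sequence. -/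
def jucysMurphy (t : ℕ → R) : ℕ → R
  | 0 => t 0
  | k + 1 => t (k + 1) * jucysMurphy t k * t (k + 1)

/-- The product of the first `k` Jucys–Murphy elements. For the generators of a group of type `Cₙ`
and `k = n` it is the longest element. -/
def jucysMurphyProd (t : ℕ → R) (k : ℕ) : R :=
  ((List.range k).map (jucysMurphy t)).prod

lemma jucysMurphyProd_succ (t : ℕ → R) (k : ℕ) :
    jucysMurphyProd t (k + 1) = jucysMurphyProd t k * jucysMurphy t k :=
  List.prod_range_succ _ k

lemma map_jucysMurphy [MonoidHomClass M R R'] (φ : M) (t : ℕ → R) (k : ℕ) :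
    φ (jucysMurphy t k) = jucysMurphy (φ ∘ t) k := by
  induction k with
  | zero => rfl
  | succ k ih => simp only [jucysMurphy, map_mul, ih, Function.comp_apply]

lemma map_jucysMurphyProd [MonoidHomClass M R R'] (φ : M) (t : ℕ → R) (k : ℕ) :
    φ (jucysMurphyProd t k) = jucysMurphyProd (φ ∘ t) k := by
  induction k with
  | zero => exact map_one φ
  | succ k ih => rw [jucysMurphyProd_succ, jucysMurphyProd_succ, map_mul, ih, map_jucysMurphy]

variable {t : ℕ → R} {n : ℕ}

lemma isUnit_jucysMurphy (ht : ∀ i < n, IsUnit (t i)) {k : ℕ} (hk : k < n) :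
    IsUnit (jucysMurphy t k) := by
  induction k with
  | zero => exact ht 0 hk
  | succ k ih => exact ((ht _ hk).mul (ih (by omega))).mul (ht _ hk)

lemma isUnit_jucysMurphyProd (ht : ∀ i < n, IsUnit (t i)) {k : ℕ} (hk : k ≤ n) :
    IsUnit (jucysMurphyProd t k) := by
  induction k with
  | zero => exact isUnit_one
  | succ k ih =>
    rw [jucysMurphyProd_succ]
    exact (ih (by omega)).mul (isUnit_jucysMurphy ht hk)

lemma commute_jucysMurphy_left {a : R} {k : ℕ} (h : ∀ i ≤ k, Commute (t i) a) :
    Commute (jucysMurphy t k) a := by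
  induction k with
  | zero => exact h 0 le_rfl
  | succ k ih =>
    exact ((h _ le_rfl).mul_left (ih fun i hi => h i (by omega))).mul_left (h _ le_rfl)

lemma commute_jucysMurphy_of_commute_prod (ht : ∀ i < n, IsUnit (t i))
    (hprod : ∀ k ≤ n, ∀ i < k, Commute (t i) (jucysMurphyProd t k)) {i k : ℕ} (hik : i < k)
    (hk : k < n) : Commute (t i) (jucysMurphy t k) := by
  have hcomm := hprod k hk.le i hik
  have hcomm_succ := hprod (k + 1) hk i (by omega)
  rw [jucysMurphyProd_succ] at hcomm_succ
  refine (isUnit_jucysMurphyProd ht hk.le).mul_left_cancel ?_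
  rw [← mul_assoc, ← hcomm.eq, mul_assoc, hcomm_succ.eq, mul_assoc]

lemma jucysMurphy_commute (ht : ∀ i < n, IsUnit (t i))
    (hprod : ∀ k ≤ n, ∀ i < k, Commute (t i) (jucysMurphyProd t k)) {i k : ℕ} (hi : i < n)
    (hk : k < n) : Commute (jucysMurphy t i) (jucysMurphy t k) := by
  wlog hik : i ≤ k generalizing i k
  · exact (this hk hi (by omega)).symm
  obtain rfl | hik := hik.eq_or_lt
  · exact Commute.refl _
  · exact commute_jucysMurphy_left fun j hj =>
      commute_jucysMurphy_of_commute_prod ht hprod (by omega) hk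

end JucysMurphy

section Hecke

variable {K A : Type*} [Field K] [Ring A] [Algebra K A] {q : K}

/-- The quadratic relation `(x - q)(x + 1) = 0` of the generators of a Hecke algebra. -/
def IsHecke (q : K) (x : A) : Prop := x * x = (q - 1) • x + q • 1

lemma IsHecke.isUnit {x : A} (hx : IsHecke q x) (hq : q ≠ 0) : IsUnit x := by
  have hright : x * (q⁻¹ • (x - (q - 1) • 1)) = 1 := by
    rw [mul_smul_comm, mul_sub, hx, mul_smul_comm, mul_one, add_sub_cancel_left, smul_smul,
      inv_mul_cancel₀ hq, one_smul]
  have hleft : (q⁻¹ • (x - (q - 1) • 1)) * x = 1 := by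
    rw [smul_mul_assoc, sub_mul, hx, smul_mul_assoc, one_mul, add_sub_cancel_left, smul_smul,
      inv_mul_cancel₀ hq, one_smul]
  exact ⟨⟨x, _, hright, hleft⟩, rfl⟩

lemma IsHecke.map {M A' : Type*} [Ring A'] [Algebra K A'] [FunLike M A A'] [AlgHomClass M K A A']
    {x : A} (hx : IsHecke q x) (φ : M) : IsHecke q (φ x) := by
  rw [IsHecke, ← map_mul, show x * x = _ from hx, map_add, map_smul, map_smul, map_one]

variable {E : Type*} [AddCommGroup E] [Module K E] {T : Module.End K E} {c : K} {v : E}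

lemma IsHecke.apply_apply (hT : IsHecke q T) (v : E) : T (T v) = (q - 1) • T v + q • v :=
  LinearMap.congr_fun hT v

lemma IsHecke.eigenvalue_eq (hT : IsHecke q T) (hv : v ≠ 0) (hc : T v = c • v) :
    c = q ∨ c = -1 := by
  have hquad := hT.apply_apply v
  rw [hc, map_smul, hc, smul_smul, smul_smul, ← add_smul] at hquad
  have hroots : (c - q) * (c + 1) = 0 := by linear_combination smul_left_injective K hv hquad
  exact (mul_eq_zero.mp hroots).imp sub_eq_zero.mp eq_neg_of_add_eq_zero_left

/-- The sequence `l` gives the joint eigenvalues of the first `m` Jucys–Murphy elements of `t` on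
some joint eigenvector. -/
def IsJucysMurphyWeight (t : ℕ → Module.End K E) (m : ℕ) (l : ℕ → K) : Prop :=
  ∃ v ≠ 0, ∀ i < m, jucysMurphy t i v = l i • v

variable {t : ℕ → Module.End K E} {l : ℕ → K}

lemma IsJucysMurphyWeight.mono {m m' : ℕ} (hl : IsJucysMurphyWeight t m l) (h : m' ≤ m) :
    IsJucysMurphyWeight t m' l :=
  let ⟨v, hv, hlv⟩ := hl
  ⟨v, hv, fun i hi => hlv i (by omega)⟩

lemma IsHecke.apply_eq_of_conj_eigenvector (hT : IsHecke q T) (hq : q ≠ 0) {L : Module.End K E}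
    {a : K} (hL : (T * L * T) v = (q * a) • v) :
    L (T v) = a • T v - (a * (q - 1)) • v := by
  have hTL : T (T (L (T v))) = T ((q * a) • v) := congrArg T hL
  rw [hT.apply_apply, map_smul, show T (L (T v)) = (q * a) • v from hL] at hTL
  refine smul_right_injective E hq ?_
  calc q • L (T v) = (q * a) • T v - (q - 1) • (q * a) • v := (sub_eq_of_eq_add' hTL.symm).symm
    _ = q • (a • T v - (a * (q - 1)) • v) := by module

/- If the last two eigenvalues are not tied to each other, then `T v - c • v` is a joint eigenvector
on which the last of them, rescaled by `q`, has replaced the last but one. -/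
lemma IsJucysMurphyWeight.succ_cases {j : ℕ} (hq : q ≠ 0) (hT : IsHecke q (t (j + 1)))
    (hcomm : ∀ i < j, Commute (t i) (t (j + 1))) (hl : IsJucysMurphyWeight t (j + 2) l) :
    (l (j + 1) = l j ∨ l (j + 1) = q * l j ∨ l (j + 1) = q ^ 2 * l j) ∨
      IsJucysMurphyWeight t (j + 1) (Function.update l j (l (j + 1) / q)) := by
  obtain ⟨v, hv, hlv⟩ := hl
  obtain ⟨a, ha⟩ : ∃ a, l (j + 1) = q * a := ⟨l (j + 1) / q, by field_simp⟩
  have haq : l (j + 1) / q = a := by rw [ha, mul_div_cancel_left₀ _ hq]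
  rw [or_iff_not_imp_left, haq, ha]
  rintro hne
  push Not at hne
  obtain ⟨hne_div, hne_one, hne_mul⟩ := hne
  have hsub : a - l j ≠ 0 := fun h => hne_one (by rw [sub_eq_zero.mp h])
  obtain ⟨c, hc⟩ : ∃ c, c * (a - l j) = a * (q - 1) := ⟨a * (q - 1) / (a - l j), by field_simp⟩
  refine ⟨t (j + 1) v - c • v, fun h0 => ?_, fun i hi => ?_⟩
  · rcases hT.eigenvalue_eq hv (sub_eq_zero.mp h0) with rfl | rfl
    · exact hne_mul (by linear_combination c * hc)
    · exact hne_div (by linear_combination -hc)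
  rcases Nat.lt_succ_iff_lt_or_eq.mp hi with hij | rfl
  · have hswap : jucysMurphy t i (t (j + 1) v) = t (j + 1) (jucysMurphy t i v) :=
      LinearMap.congr_fun (commute_jucysMurphy_left fun k hk => hcomm k (by omega)).eq v
    rw [Function.update_of_ne hij.ne, map_sub, map_smul, hswap, hlv i (by omega), map_smul]
    module
  · have hLT : jucysMurphy t i (t (i + 1) v) = a • t (i + 1) v - (a * (q - 1)) • v :=
      hT.apply_eq_of_conj_eigenvector hq ((hlv (i + 1) (by omega)).trans (by rw [ha]))
    rw [Function.update_self, map_sub, map_smul, hLT, hlv i (by omega), ← hc]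
    module

lemma jucysMurphyProd_apply_eq_smul {n : ℕ} (hl : ∀ i < n, jucysMurphy t i v = l i • v) :
    jucysMurphyProd t n v = (∏ i ∈ Finset.range n, l i) • v := by
  induction n with
  | zero => simp [jucysMurphyProd]
  | succ n ih =>
    rw [jucysMurphyProd_succ, Module.End.mul_apply, hl n n.lt_succ_self, map_smul,
      ih fun i hi => hl i (by omega), Finset.prod_range_succ, smul_smul, mul_comm]

end Hecke

section WeightBounds

open Finset in
/-- The exponent of `q` in the bound for the `j`-th eigenvalue of a Jucys–Murphy weight `l`. -/
noncomputable def weightExponent (l : ℕ → ℝ) (j : ℕ) : ℕ :=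
  j + (if 0 < l j then 1 else 0) + #{i ∈ range j | 0 < l i * l j}

variable {l : ℕ → ℝ}

lemma weightExponent_succ_of_eq_mul {j : ℕ} {c : ℝ} (hc : 0 < c) (hlj : l j ≠ 0)
    (hl : l (j + 1) = c * l j) : weightExponent l (j + 1) = weightExponent l j + 2 := by
  have hpos : 0 < l j * l (j + 1) := by rw [hl]; nlinarith [mul_self_pos.mpr hlj]
  have hcount (i : ℕ) : 0 < l i * (c * l j) ↔ 0 < l i * l j := by
    rw [mul_left_comm, mul_pos_iff_of_pos_left hc]
  rw [weightExponent, weightExponent, Finset.range_add_one, Finset.filter_insert, if_pos hpos,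
    Finset.card_insert_of_notMem (by simp), hl]
  simp only [mul_pos_iff_of_pos_left hc, hcount]
  omega

lemma weightExponent_update_le {j : ℕ} {c : ℝ} (hc : 0 < c) :
    weightExponent (Function.update l j (l (j + 1) / c)) j + 1 ≤ weightExponent l (j + 1) := by
  have hcount : {i ∈ Finset.range j | 0 < Function.update l j (l (j + 1) / c) i *
        (l (j + 1) / c)} ⊆ {i ∈ Finset.range (j + 1) | 0 < l i * l (j + 1)} := by
    intro i hi
    simp only [Finset.mem_filter, Finset.mem_range] at hi ⊢
    rw [Function.update_of_ne hi.1.ne, ← mul_div_assoc, div_pos_iff_of_pos_right hc] at hi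
    exact ⟨by omega, hi.2⟩
  have hcard := Finset.card_le_card hcount
  simp only [weightExponent, Function.update_self, div_pos_iff_of_pos_right hc]
  omega

variable {E : Type*} [AddCommGroup E] [Module ℝ E] {q : ℝ} {t : ℕ → Module.End ℝ E} {n : ℕ}

lemma abs_le_pow_weightExponent (hq : 1 < q) (ht : ∀ i < n, IsHecke q (t i))
    (hfar : ∀ i j, i + 2 ≤ j → j < n → Commute (t i) (t j)) {j : ℕ} (hj : j < n)
    (hl : IsJucysMurphyWeight t (j + 1) l) : |l j| ≤ q ^ weightExponent l j := by
  have hq0 : 0 < q := by linarith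
  induction j generalizing l with
  | zero =>
    obtain ⟨v, hv, hlv⟩ := hl
    rcases (ht 0 hj).eigenvalue_eq hv (hlv 0 one_pos) with h | h
    · simp [weightExponent, h, hq0, abs_of_pos hq0]
    · simp [weightExponent, h, show ¬ (1 : ℝ) < 0 by norm_num]
  | succ j ih =>
    rcases hl.succ_cases hq0.ne' (ht _ hj) (fun i hi => hfar _ _ (by omega) hj) with htied | hswap
    · obtain ⟨c, hc, hc2, hlc⟩ : ∃ c, 0 < c ∧ c ≤ q ^ 2 ∧ l (j + 1) = c * l j := by
        rcases htied with h | h | h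
        · exact ⟨1, one_pos, one_le_pow₀ hq.le, by rw [h, one_mul]⟩
        · exact ⟨q, hq0, le_self_pow₀ hq.le two_ne_zero, h⟩
        · exact ⟨q ^ 2, by positivity, le_rfl, h⟩
      by_cases hlj : l j = 0
      · rw [hlc, hlj, mul_zero, abs_zero]; positivity
      calc |l (j + 1)| = c * |l j| := by rw [hlc, abs_mul, abs_of_pos hc]
        _ ≤ q ^ 2 * q ^ weightExponent l j := by
          gcongr; exact ih (by omega) (hl.mono (by omega))
        _ = q ^ weightExponent l (j + 1) := by
          rw [weightExponent_succ_of_eq_mul hc hlj hlc, pow_add, mul_comm]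
    · have hdiv := ih (by omega) hswap
      rw [Function.update_self, abs_div, abs_of_pos hq0, div_le_iff₀ hq0, ← pow_succ] at hdiv
      exact hdiv.trans (pow_le_pow_right₀ hq.le (weightExponent_update_le hq0))

lemma weightExponent_of_pos {j : ℕ} (h : 0 < l j) :
    weightExponent l j = j + 1 + {i ∈ Finset.range j | 0 < l i}.card := by
  simp only [weightExponent, h, if_true, mul_pos_iff_of_pos_right]

lemma weightExponent_of_neg {j : ℕ} (h : l j < 0) :
    weightExponent l j = j + {i ∈ Finset.range j | l i < 0}.card := by
  simp only [weightExponent, if_neg h.not_gt, add_zero, ← neg_mul_neg (l _) (l j),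
    mul_pos_iff_of_pos_right (neg_pos.mpr h), neg_pos]

open Finset in
lemma sum_weightExponent (hl : ∀ j < n, l j ≠ 0) {p b : ℕ} (hp : #{i ∈ range n | 0 < l i} = p)
    (hb : #{i ∈ range n | l i < 0} = b) :
    p + b = n ∧ ∑ j ∈ range n, weightExponent l j = p * p + p * b + b * (b - 1) := by
  induction n generalizing p b with
  | zero =>
    simp only [range_zero, filter_empty, card_empty] at hp hb
    subst hp hb
    simp
  | succ n ih =>
    obtain ⟨p', hp'⟩ : ∃ p', #{i ∈ range n | 0 < l i} = p' := ⟨_, rfl⟩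
    obtain ⟨b', hb'⟩ : ∃ b', #{i ∈ range n | l i < 0} = b' := ⟨_, rfl⟩
    obtain ⟨hn, hsum⟩ := ih (fun j hj => hl j (by omega)) hp' hb'
    rw [range_add_one, filter_insert] at hp hb
    rw [sum_range_succ, hsum]
    rcases (hl n n.lt_succ_self).lt_or_gt with hneg | hpos
    · rw [if_neg hneg.not_gt, hp'] at hp
      rw [if_pos hneg, card_insert_of_notMem (by simp), hb'] at hb
      rw [weightExponent_of_neg hneg, hb', ← hn, ← hp, ← hb]
      refine ⟨by ring, ?_⟩
      cases b' with
      | zero => ring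
      | succ b' => rw [Nat.add_sub_cancel, Nat.add_sub_cancel]; ring
    · rw [if_neg hpos.not_gt, hb'] at hb
      rw [if_pos hpos, card_insert_of_notMem (by simp), hp'] at hp
      rw [weightExponent_of_pos hpos, hp', ← hn, ← hp, ← hb]
      exact ⟨by ring, by ring⟩

open Finset in
lemma sum_weightExponent_le (hl : ∀ j < n, l j ≠ 0) {i : ℕ} (hi : i < n) (hneg : l i < 0) :
    ∑ j ∈ range n, weightExponent l j ≤ n * (n - 1) := by
  obtain ⟨b, hb⟩ : ∃ b, #{i ∈ range n | l i < 0} = b + 1 :=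
    Nat.exists_eq_add_one.mpr (card_pos.mpr ⟨i, by simp [hi, hneg]⟩)
  obtain ⟨p, hp⟩ : ∃ p, #{i ∈ range n | 0 < l i} = p := ⟨_, rfl⟩
  obtain ⟨hn, hsum⟩ := sum_weightExponent hl hp hb
  rw [hsum, show n - 1 = p + b by omega, ← hn, Nat.add_sub_cancel]
  nlinarith

lemma neg_pow_le_prod_of_abs_le_pow_weightExponent (hq : 1 ≤ q) (hl : ∀ j < n, l j ≠ 0)
    (hbound : ∀ j < n, |l j| ≤ q ^ weightExponent l j) :
    -q ^ (n * (n - 1)) ≤ ∏ j ∈ Finset.range n, l j := by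
  by_cases hneg : ∃ i < n, l i < 0
  · obtain ⟨i, hi, hneg⟩ := hneg
    refine (abs_le.mp ?_).1
    calc |∏ j ∈ Finset.range n, l j| = ∏ j ∈ Finset.range n, |l j| := Finset.abs_prod ..
      _ ≤ ∏ j ∈ Finset.range n, q ^ weightExponent l j :=
        Finset.prod_le_prod (fun _ _ => abs_nonneg _) fun j hj =>
          hbound j (Finset.mem_range.mp hj)
      _ = q ^ ∑ j ∈ Finset.range n, weightExponent l j := Finset.prod_pow_eq_pow_sum ..
      _ ≤ q ^ (n * (n - 1)) := pow_le_pow_right₀ hq (sum_weightExponent_le hl hi hneg)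
  · push Not at hneg
    exact (neg_nonpos.mpr (by positivity)).trans
      (Finset.prod_nonneg fun j hj => hneg j (Finset.mem_range.mp hj))

end WeightBounds

section Spectral

variable {E : Type*} [NormedAddCommGroup E] [InnerProductSpace ℝ E] {q : ℝ}
  {t : ℕ → Module.End ℝ E} {n : ℕ}

lemma isSymmetric_jucysMurphy (ht : ∀ i < n, (t i).IsSymmetric) {k : ℕ} (hk : k < n) :
    (jucysMurphy t k).IsSymmetric := by
  induction k with
  | zero => exact ht 0 hk
  | succ k ih =>
    intro x y
    simp only [jucysMurphy, Module.End.mul_apply]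
    rw [ht _ hk, ih (by omega), ht _ hk]

variable [FiniteDimensional ℝ E]

lemma inner_apply_self_nonneg_of_joint_eigenvectors {ι : Type*} {L : ι → Module.End ℝ E}
    (hsymm : ∀ i, (L i).IsSymmetric) (hcomm : Pairwise (Function.onFun Commute L))
    {A : Module.End ℝ E}
    (hA : ∀ (χ : ι → ℝ) (v : E), v ≠ 0 → (∀ i, L i v = χ i • v) → ∃ μ : ℝ, 0 ≤ μ ∧ A v = μ • v)
    (f : E) : 0 ≤ inner ℝ f (A f) := by
  have hf : f ∈ ⨆ χ : ι → ℝ, ⨅ i, Module.End.eigenspace (L i) (χ i) := by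
    rw [LinearMap.IsSymmetric.iSup_iInf_eq_top_of_commute hsymm hcomm]
    exact Submodule.mem_top
  obtain ⟨g, hg, rfl⟩ := (Submodule.mem_iSup_iff_exists_finsupp _ _).mp hf
  have hμ (χ : ι → ℝ) : ∃ μ : ℝ, 0 ≤ μ ∧ A (g χ) = μ • g χ := by
    by_cases h0 : g χ = 0
    · exact ⟨0, le_rfl, by rw [h0, map_zero, smul_zero]⟩
    · exact hA χ _ h0 fun i =>
        Module.End.mem_eigenspace_iff.mp ((Submodule.mem_iInf _).mp (hg χ) i)
  choose μ hμ_nonneg hμ using hμ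
  have hinner := (LinearMap.IsSymmetric.orthogonalFamily_iInf_eigenspaces hsymm).inner_sum
    (fun χ => ⟨g χ, hg χ⟩) (fun χ => μ χ • ⟨g χ, hg χ⟩) g.support
  simp only [Submodule.coe_subtypeₗᵢ, Submodule.subtype_apply, Submodule.coe_smul,
    inner_smul_right] at hinner
  simp only [Finsupp.sum, map_sum, hμ, hinner]
  exact Finset.sum_nonneg fun χ _ => mul_nonneg (hμ_nonneg χ) real_inner_self_nonneg

theorem inner_jucysMurphyProd_nonneg (hq : 1 < q) (hsymm : ∀ i < n, (t i).IsSymmetric)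
    (ht : ∀ i < n, IsHecke q (t i))
    (hfar : ∀ i j, i + 2 ≤ j → j < n → Commute (t i) (t j))
    (hprod : ∀ k ≤ n, ∀ i < k, Commute (t i) (jucysMurphyProd t k)) (f : E) :
    0 ≤ inner ℝ f ((jucysMurphyProd t n + q ^ (n * (n - 1)) • (1 : Module.End ℝ E)) f) := by
  have hunit : ∀ i < n, IsUnit (t i) := fun i hi => (ht i hi).isUnit (by positivity)
  refine inner_apply_self_nonneg_of_joint_eigenvectors
    (L := fun i : Fin n => jucysMurphy t i) (fun i => isSymmetric_jucysMurphy hsymm i.2)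
    (fun i j _ => jucysMurphy_commute hunit hprod i.2 j.2) (fun χ v hv hχ => ?_) f
  obtain ⟨l, rfl⟩ : ∃ l : ℕ → ℝ, χ = fun i : Fin n => l i :=
    ⟨fun i => if h : i < n then χ ⟨i, h⟩ else 0, by ext i; simp⟩
  have hl : ∀ i < n, jucysMurphy t i v = l i • v := fun i hi => hχ ⟨i, hi⟩
  have hl0 : ∀ i < n, l i ≠ 0 := fun i hi h0 => hv <|
    ((Module.End.isUnit_iff _).mp (isUnit_jucysMurphy hunit hi)).injective <| by
      rw [hl i hi, h0, zero_smul, map_zero]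
  have hbound := neg_pow_le_prod_of_abs_le_pow_weightExponent hq.le hl0 fun j hj =>
    abs_le_pow_weightExponent hq ht hfar hj ⟨v, hv, fun i hi => hl i (by omega)⟩
  refine ⟨_, neg_le_iff_add_nonneg.mp hbound, ?_⟩
  rw [LinearMap.add_apply, jucysMurphyProd_apply_eq_smul hl, LinearMap.smul_apply,
    Module.End.one_apply, add_smul]

end Spectral

/-! ### Subspaces covering a subspace -/

section ModularLattice

variable {α : Type*} [Lattice α] [IsModularLattice α]

lemma covBy_not_le_sup_inf_iff [OrderBot α] {a u b c : α} (hu : a ⋖ u) (hub : u ≤ b)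
    (hac : a ⊓ c = ⊥) : ¬ u ≤ a ⊔ b ⊓ c ↔ u ⊓ c = ⊥ := by
  refine ⟨fun h => ?_, fun h hle => hu.lt.ne' ?_⟩
  · by_contra huc
    have hlt : a < a ⊔ u ⊓ c := left_lt_sup.mpr fun hle =>
      huc (le_bot_iff.mp (hac ▸ le_inf hle inf_le_right))
    refine h ?_
    calc u = a ⊔ u ⊓ c :=
          ((hu.eq_or_eq hlt.le (sup_le hu.le inf_le_left)).resolve_left hlt.ne').symm
      _ ≤ a ⊔ b ⊓ c := by gcongr
  · calc u = (a ⊔ b ⊓ c) ⊓ u := (inf_eq_right.mpr hle).symm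
      _ = a ⊔ (b ⊓ c) ⊓ u := sup_inf_assoc_of_le _ hu.le
      _ = a ⊔ u ⊓ c := by rw [inf_right_comm, inf_eq_right.mpr hub]
      _ = a := by rw [h, sup_bot_eq]

end ModularLattice

section Covers

variable {F V : Type*} [DivisionRing F] [AddCommGroup V] [Module F V] {E G U : Submodule F V}

lemma covBy_iff_finrank [FiniteDimensional F V] :
    E ⋖ U ↔ E ≤ U ∧ finrank F U = finrank F E + 1 := by
  have hquot (h : E ≤ U) : finrank F (U ⧸ E.comap U.subtype) + finrank F E = finrank F U := by
    rw [← (Submodule.comapSubtypeEquivOfLe h).finrank_eq, Submodule.finrank_quotient_add_finrank]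
  constructor
  · intro h
    have := isSimpleModule_iff_finrank_eq_one.mp ((covBy_iff_quot_is_simple h.le).mp h)
    exact ⟨h.le, by rw [← hquot h.le, this, add_comm]⟩
  · rintro ⟨hle, h⟩
    rw [covBy_iff_quot_is_simple hle, isSimpleModule_iff_finrank_eq_one]
    have := hquot hle
    lia

/-- The embedding of the lattice of subspaces of `G / E` whose range is the interval `[E, G]`. -/
def subquotientEmbedding (E G : Submodule F V) :
    Submodule F (G ⧸ E.comap G.subtype) ↪o Submodule F V :=
  (Submodule.comapMkQOrderEmbedding _).trans (Submodule.MapSubtype.orderEmbedding G)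

lemma range_subquotientEmbedding (hEG : E ≤ G) :
    Set.range (subquotientEmbedding E G) = Set.Icc E G := by
  ext U
  constructor
  · rintro ⟨W, rfl⟩
    refine ⟨fun x hx => ⟨⟨x, hEG hx⟩, ?_, rfl⟩, Submodule.map_subtype_le G _⟩
    exact Submodule.le_comap_mkQ _ W hx
  · rintro ⟨hEU, hUG⟩
    refine ⟨(U.comap G.subtype).map (Submodule.mkQ _), ?_⟩
    change ((U.comap G.subtype).map _ |>.comap _).map G.subtype = U
    rw [Submodule.comap_map_mkQ, sup_eq_right.mpr (Submodule.comap_mono hEU),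
      Submodule.map_comap_subtype, inf_eq_right.mpr hUG]

lemma ncard_covBy_le [Finite F] [FiniteDimensional F V] {k : ℕ} (hEG : E ≤ G)
    (hk : finrank F G = finrank F E + k) :
    {U | E ⋖ U ∧ U ≤ G}.ncard = ∑ i ∈ Finset.range k, Nat.card F ^ i := by
  set e := subquotientEmbedding E G
  have hrange : Set.range e = Set.Icc E G := range_subquotientEmbedding hEG
  have hbot : e ⊥ = E := by
    obtain ⟨W, hW⟩ := hrange.ge ⟨le_rfl, hEG⟩
    exact le_antisymm ((e.monotone bot_le).trans_eq hW) (hrange.le ⟨⊥, rfl⟩).1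
  have hquot : finrank F (G ⧸ E.comap G.subtype) = k := by
    have := (E.comap G.subtype).finrank_quotient_add_finrank
    rw [(Submodule.comapSubtypeEquivOfLe hEG).finrank_eq] at this
    lia
  have himage : {U | E ⋖ U ∧ U ≤ G} = e '' {W | finrank F W = 1} := by
    have hcov (W) : E ⋖ e W ↔ finrank F W = 1 := calc
      E ⋖ e W ↔ e ⊥ ⋖ e W := by rw [hbot]
      _ ↔ ⊥ ⋖ W := Set.OrdConnected.apply_covBy_apply_iff e (hrange ▸ Set.ordConnected_Icc)
      _ ↔ finrank F W = 1 := bot_covBy_iff.trans Submodule.isAtom_iff_finrank_eq_one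
    ext U
    constructor
    · rintro ⟨hU, hUG⟩
      obtain ⟨W, rfl⟩ := hrange.ge ⟨hU.le, hUG⟩
      exact ⟨W, (hcov W).mp hU, rfl⟩
    · rintro ⟨W, hW, rfl⟩
      exact ⟨(hcov W).mpr hW, (hrange.le ⟨W, rfl⟩).2⟩
  rw [himage, Set.ncard_image_of_injective _ e.injective,
    ← Projectivization.card_of_finrank F _ hquot]
  exact Nat.card_congr (Projectivization.equivSubmodule F _).symm

lemma ncard_covBy_le_inf_eq_bot [Finite F] [FiniteDimensional F V] {K : Submodule F V} {k : ℕ}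
    (hEG : E ≤ G) (hEK : E ⊓ K = ⊥) (hGK : finrank F (G ⊓ K : Submodule F V) = k)
    (hk : finrank F G = finrank F E + (k + 1)) :
    {U | E ⋖ U ∧ U ≤ G ∧ U ⊓ K = ⊥}.ncard = Nat.card F ^ k := by
  have : Finite V := Module.finite_of_finite F
  have hE : finrank F (E ⊔ G ⊓ K : Submodule F V) = finrank F E + k := by
    have := Submodule.finrank_sup_add_finrank_inf_eq E (G ⊓ K)
    rw [inf_left_comm, hEK, inf_bot_eq, finrank_bot] at this
    lia
  have hsplit : {U | E ⋖ U ∧ U ≤ G ∧ U ⊓ K = ⊥} =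
      {U | E ⋖ U ∧ U ≤ G} \ {U | E ⋖ U ∧ U ≤ E ⊔ G ⊓ K} := by
    ext U
    simp only [Set.mem_ofPred_eq, Set.mem_sdiff]
    constructor
    · rintro ⟨hU, hUG, hUK⟩
      exact ⟨⟨hU, hUG⟩, fun h => (covBy_not_le_sup_inf_iff hU hUG hEK).mpr hUK h.2⟩
    · rintro ⟨⟨hU, hUG⟩, h⟩
      exact ⟨hU, hUG, (covBy_not_le_sup_inf_iff hU hUG hEK).mp fun hle => h ⟨hU, hle⟩⟩
  have hsub : {U | E ⋖ U ∧ U ≤ E ⊔ G ⊓ K} ⊆ {U | E ⋖ U ∧ U ≤ G} := fun U hU =>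
    ⟨hU.1, hU.2.trans (sup_le hEG inf_le_left)⟩
  rw [hsplit, Set.ncard_sdiff hsub, ncard_covBy_le hEG hk, ncard_covBy_le le_sup_left hE,
    Finset.sum_range_succ, Nat.add_sub_cancel_left]

end Covers

/-! ### Orthogonality for alternating forms -/

section Form

variable {F V : Type} [Field F] [AddCommGroup V] [Module F V] {B : V →ₗ[F] V →ₗ[F] F}
  {U W X Y : Submodule F V}

lemma mem_bperp {v : V} : v ∈ bperp B W ↔ ∀ w ∈ W, B w v = 0 := by
  simp [bperp]

lemma bperp_eq_orthogonal (W : Submodule F V) : bperp B W = LinearMap.BilinForm.orthogonal B W := by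
  ext v
  exact mem_bperp

lemma bperp_anti (h : U ≤ W) : bperp B W ≤ bperp B U :=
  fun _ hv => mem_bperp.mpr fun u hu => mem_bperp.mp hv u (h hu)

lemma isTotIso_iff_le_bperp : IsTotIso B W ↔ W ≤ bperp B W :=
  ⟨fun h w hw => mem_bperp.mpr fun u hu => h u hu w hw, fun h u hu _ hw => mem_bperp.mp (h hw) u hu⟩

section Alternating

variable (halt : IsAltForm B)
include halt

lemma le_bperp_comm : U ≤ bperp B W ↔ W ≤ bperp B U := by
  have hB : LinearMap.IsAlt B := halt
  have h (X Y : Submodule F V) (hX : X ≤ bperp B Y) : Y ≤ bperp B X := fun y hy =>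
    mem_bperp.mpr fun x hx => hB.isRefl _ _ (mem_bperp.mp (hX hx) y hy)
  exact ⟨h U W, h W U⟩

lemma bperp_sup : bperp B (U ⊔ W) = bperp B U ⊓ bperp B W :=
  eq_of_forall_le_iff fun X => by
    rw [le_inf_iff, le_bperp_comm halt, sup_le_iff, le_bperp_comm halt (U := U),
      le_bperp_comm halt (U := W)]

lemma le_bperp_of_covBy (hW : W ≤ bperp B W) (hWU : W ⋖ U) (hU : U ≤ bperp B W) :
    U ≤ bperp B U := by
  obtain ⟨u, hu, huW⟩ := SetLike.exists_of_lt hWU.lt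
  have hspan : W ⊔ F ∙ u = U := by
    refine (hWU.eq_or_eq le_sup_left (sup_le hWU.le ?_)).resolve_left fun h => huW ?_
    · exact (Submodule.span_singleton_le_iff_mem u U).mpr hu
    · exact h ▸ Submodule.mem_sup_right (Submodule.mem_span_singleton_self u)
  have huu : F ∙ u ≤ bperp B (F ∙ u) := by
    rw [Submodule.span_singleton_le_iff_mem, mem_bperp]
    intro w hw
    obtain ⟨a, rfl⟩ := Submodule.mem_span_singleton.mp hw
    rw [map_smul, LinearMap.smul_apply, halt u, smul_zero]
  have huW' : F ∙ u ≤ bperp B W := (Submodule.span_singleton_le_iff_mem u _).mpr (hU hu)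
  rw [← hspan, bperp_sup halt]
  exact sup_le (le_inf hW ((le_bperp_comm halt).mp huW')) (le_inf huW' huu)

end Alternating

section Nondegenerate

variable [FiniteDimensional F V] (halt : IsAltForm B) (hnd : NondegForm B)
include halt hnd

lemma finrank_bperp : finrank F (bperp B W) + finrank F W = finrank F V := by
  have hB : LinearMap.IsAlt B := halt
  rw [bperp_eq_orthogonal, LinearMap.BilinForm.finrank_orthogonal
    (hB.isRefl.nondegenerate_iff_separatingLeft.mpr hnd)]
  exact Nat.sub_add_cancel W.finrank_le

lemma bperp_bperp : bperp B (bperp B W) = W := by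
  have hB : LinearMap.IsAlt B := halt
  rw [bperp_eq_orthogonal, bperp_eq_orthogonal, LinearMap.BilinForm.orthogonal_orthogonal
    (hB.isRefl.nondegenerate_iff_separatingLeft.mpr hnd) hB.isRefl]

lemma bperp_inf : bperp B (U ⊓ W) = bperp B U ⊔ bperp B W := by
  rw [← bperp_bperp halt hnd (W := bperp B U ⊔ bperp B W), bperp_sup halt, bperp_bperp halt hnd,
    bperp_bperp halt hnd]

lemma finrank_bperp_inf_add_finrank : finrank F (bperp B X ⊓ Y : Submodule F V) + finrank F X =
    finrank F (bperp B Y ⊓ X : Submodule F V) + finrank F Y := by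
  have hperp : bperp B (bperp B X ⊓ Y) = X ⊔ bperp B Y := by
    rw [bperp_inf halt hnd, bperp_bperp halt hnd]
  have h₁ := finrank_bperp halt hnd (W := bperp B X ⊓ Y)
  have h₂ := finrank_bperp halt hnd (W := Y)
  have h₃ := Submodule.finrank_sup_add_finrank_inf_eq X (bperp B Y)
  rw [hperp] at h₁
  rw [inf_comm (bperp B Y)]
  lia

end Nondegenerate

end Form

/-! ### Chambers and panels -/

section Chambers

variable {F V : Type} [Field F] [AddCommGroup V] [Module F V] {B : V →ₗ[F] V →ₗ[F] F}
  {U : Submodule F V} {n i j : ℕ}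

/-- The chambers of the polar space of rank `n` defined by `B`. -/
abbrev Chamber (B : V →ₗ[F] V →ₗ[F] F) (n : ℕ) : Type := SFlag B (Finset.Icc 1 n)

namespace Chamber

variable (C : Chamber B n) {D D' : Chamber B n}

lemma space_zero : C.space 0 = ⊥ :=
  C.eq_bot 0 (by simp)

lemma isTotIso_space (hi : i ≤ n) : IsTotIso B (C.space i) := by
  obtain rfl | hpos := i.eq_zero_or_pos
  · simp [IsTotIso, C.space_zero]
  · exact C.isotropic i (Finset.mem_Icc.mpr ⟨hpos, hi⟩)

lemma finrank_space (hi : i ≤ n) : finrank F (C.space i) = i := by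
  obtain rfl | hpos := i.eq_zero_or_pos
  · rw [C.space_zero, finrank_bot]
  · exact C.finrank_eq i (Finset.mem_Icc.mpr ⟨hpos, hi⟩)

lemma space_mono (hij : i ≤ j) (hj : j ≤ n) : C.space i ≤ C.space j := by
  obtain rfl | hpos := i.eq_zero_or_pos
  · exact C.space_zero ▸ bot_le
  · exact C.mono i (Finset.mem_Icc.mpr ⟨hpos, hij.trans hj⟩) j
      (Finset.mem_Icc.mpr ⟨hpos.trans_le hij, hj⟩) hij

lemma space_le_bperp (hi : i ≤ n) (hj : j ≤ n) : C.space i ≤ bperp B (C.space j) := calc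
  C.space i ≤ C.space n := C.space_mono hi le_rfl
  _ ≤ bperp B (C.space n) := isTotIso_iff_le_bperp.mp (C.isTotIso_space le_rfl)
  _ ≤ bperp B (C.space j) := bperp_anti (C.space_mono hj le_rfl)

lemma space_covBy [FiniteDimensional F V] (hi : i < n) : C.space i ⋖ C.space (i + 1) :=
  covBy_iff_finrank.mpr ⟨C.space_mono i.le_succ hi, by
    rw [C.finrank_space hi, C.finrank_space hi.le]⟩

variable {C} in
lemma ext (h : ∀ i ≤ n, C.space i = D.space i) : C = D := by
  have hspace : C.space = D.space := funext fun i => by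
    obtain hi | hi := le_or_gt i n
    · exact h i hi
    · have : i ∉ Finset.Icc 1 n := fun h => hi.not_ge (Finset.mem_Icc.mp h).2
      rw [C.eq_bot i this, D.eq_bot i this]
  cases C
  cases D
  congr

variable {C} in
lemma flagOpp_iff :
    FlagOpp C D ↔ ∀ i ≤ n, bperp B (C.space i) ⊓ D.space i = ⊥ := by
  refine ⟨fun h i hi => ?_, fun h i hi => h i (Finset.mem_Icc.mp hi).2⟩
  obtain rfl | hpos := i.eq_zero_or_pos
  · rw [D.space_zero, inf_bot_eq]
  · exact h i (Finset.mem_Icc.mpr ⟨hpos, hi⟩)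

instance [Finite V] : Finite (Chamber B n) :=
  Finite.of_injective (fun C (i : Fin (n + 1)) => C.space i) fun _ _ h =>
    ext fun i hi => congrFun h ⟨i, Nat.lt_succ_of_le hi⟩

lemma exists_space_eq [FiniteDimensional F V] (halt : IsAltForm B) {c : ℕ → Submodule F V}
    (h_zero : c 0 = ⊥) (hstep : ∀ i < n, c i ⋖ c (i + 1) ∧ c (i + 1) ≤ bperp B (c i))
    (h_bot : ∀ i, n < i → c i = ⊥) : ∃ C : Chamber B n, C.space = c := by
  have hrank (i) (hi : i ≤ n) : finrank F (c i) = i := by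
    induction i with
    | zero => rw [h_zero, finrank_bot]
    | succ i ih => rw [(covBy_iff_finrank.mp (hstep i hi).1).2, ih (by lia)]
  have hiso (i) (hi : i ≤ n) : c i ≤ bperp B (c i) := by
    induction i with
    | zero => exact h_zero ▸ bot_le
    | succ i ih => exact le_bperp_of_covBy halt (ih (by lia)) (hstep i hi).1 (hstep i hi).2
  have hmono (i j) (hij : i ≤ j) (hj : j ≤ n) : c i ≤ c j := by
    induction j, hij using Nat.le_induction with
    | base => exact le_rfl
    | succ j _ ih => exact (ih (by lia)).trans (hstep j hj).1.le
  refine ⟨⟨c, fun i hi => isTotIso_iff_le_bperp.mpr (hiso i (Finset.mem_Icc.mp hi).2),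
    fun i hi => hrank i (Finset.mem_Icc.mp hi).2,
    fun i _ j hj hij => hmono i j hij (Finset.mem_Icc.mp hj).2, fun i hi => ?_⟩, rfl⟩
  obtain rfl | hpos := i.eq_zero_or_pos
  · exact h_zero
  · exact h_bot i (by simpa [Nat.succ_le_iff.mpr hpos] using hi)

/-- Two chambers are `j`-adjacent if they agree in all positions except possibly `j`. -/
def Adj (j : ℕ) (D D' : Chamber B n) : Prop := ∀ i ≠ j, D.space i = D'.space i

lemma Adj.refl (j : ℕ) (D : Chamber B n) : Adj j D D := fun _ _ => rfl

lemma Adj.symm (h : Adj j D D') : Adj j D' D := fun i hi => (h i hi).symm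

lemma Adj.trans {D'' : Chamber B n} (h : Adj j D D') (h' : Adj j D' D'') : Adj j D D'' :=
  fun i hi => (h i hi).trans (h' i hi)

lemma Adj.eq_of_space_eq (h : Adj j D D') (hj : D.space j = D'.space j) : D = D' :=
  ext fun i _ => if hi : i = j then hi ▸ hj else h i hi

/-- The largest subspace in which an entry of a chamber in position `j + 1` can vary while the
other entries are fixed; the last entry is only constrained by being totally isotropic. -/
def ceiling (D : Chamber B n) (j : ℕ) : Submodule F V :=
  if j + 1 < n then D.space (j + 2) else bperp B (D.space j)

/-- The panel of cotype `j + 1` of a chamber, encoded as the set of entries in position `j + 1` of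
its `(j + 1)`-adjacent chambers. -/
def panel (D : Chamber B n) (j : ℕ) : Set (Submodule F V) :=
  {U | D.space j ⋖ U ∧ U ≤ D.ceiling j}

lemma ceiling_of_lt (hj : j + 1 < n) : C.ceiling j = C.space (j + 2) := if_pos hj

lemma ceiling_of_le (hj : n ≤ j + 1) : C.ceiling j = bperp B (C.space j) := if_neg hj.not_gt

lemma ceiling_le_bperp (hj : j < n) : C.ceiling j ≤ bperp B (C.space j) := by
  obtain h | h := lt_or_ge (j + 1) n
  · exact (C.ceiling_of_lt h).trans_le (C.space_le_bperp h hj.le)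
  · exact (C.ceiling_of_le h).le

lemma space_le_ceiling (hj : j < n) : C.space (j + 1) ≤ C.ceiling j := by
  obtain h | h := lt_or_ge (j + 1) n
  · exact (C.space_mono (by lia) h).trans_eq (C.ceiling_of_lt h).symm
  · exact (C.space_le_bperp hj hj.le).trans_eq (C.ceiling_of_le h).symm

lemma Adj.panel_eq (h : Adj (j + 1) D D') : D.panel j = D'.panel j := by
  simp only [panel, ceiling, h j (by lia), h (j + 2) (by lia)]

variable [FiniteDimensional F V]

lemma space_mem_panel (hj : j < n) : C.space (j + 1) ∈ C.panel j :=
  ⟨C.space_covBy hj, C.space_le_ceiling hj⟩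

lemma exists_adj_space_eq (halt : IsAltForm B) (hj : j < n) (hU : U ∈ C.panel j) :
    ∃ D, Adj (j + 1) D C ∧ D.space (j + 1) = U := by
  obtain ⟨hcov, hle⟩ := hU
  obtain ⟨D, hD⟩ := exists_space_eq (n := n) (c := Function.update C.space (j + 1) U) halt
    (by rw [Function.update_of_ne (by lia), C.space_zero])
    (fun i hi => by
      obtain rfl | hij := eq_or_ne i j
      · rw [Function.update_self, Function.update_of_ne (by lia)]
        exact ⟨hcov, hle.trans (C.ceiling_le_bperp hi)⟩
      obtain rfl | hij' := eq_or_ne i (j + 1)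
      · rw [Function.update_self, Function.update_of_ne (by lia)]
        have hUC : U ≤ C.space (j + 2) := hle.trans_eq (C.ceiling_of_lt hi)
        refine ⟨covBy_iff_finrank.mpr ⟨hUC, ?_⟩,
          (C.space_le_bperp hi hi).trans (bperp_anti hUC)⟩
        rw [(covBy_iff_finrank.mp hcov).2, C.finrank_space hj.le, C.finrank_space hi]
      · rw [Function.update_of_ne (by lia), Function.update_of_ne (by lia)]
        exact ⟨C.space_covBy hi, C.space_le_bperp hi hi.le⟩)
    (fun i hi => by
      rw [Function.update_of_ne (by lia)]
      exact C.eq_bot i fun h => hi.not_ge (Finset.mem_Icc.mp h).2)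
  exact ⟨D, fun i hi => by rw [hD, Function.update_of_ne hi], by rw [hD, Function.update_self]⟩

variable (halt : IsAltForm B) (hnd : NondegForm B) (hdim : finrank F V = 2 * n)
include halt hnd hdim

lemma finrank_ceiling (hj : j < n) : finrank F (C.ceiling j) = j + 2 := by
  obtain h | h := lt_or_ge (j + 1) n
  · rw [C.ceiling_of_lt h, C.finrank_space h]
  · rw [C.ceiling_of_le h]
    have := finrank_bperp halt hnd (W := C.space j)
    rw [C.finrank_space hj.le] at this
    lia

lemma ncard_panel [Finite F] (hj : j < n) : (C.panel j).ncard = Nat.card F + 1 := by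
  have hle : C.space j ≤ C.ceiling j :=
    (C.space_covBy hj).le.trans (C.space_le_ceiling hj)
  rw [panel, ncard_covBy_le (k := 2) hle (by
    rw [C.finrank_ceiling halt hnd hdim hj, C.finrank_space hj.le]), Finset.sum_range_succ,
    Finset.sum_range_one, pow_zero, pow_one, add_comm]

lemma ncard_adj [Finite F] (hj : j < n) : {D | Adj (j + 1) D C}.ncard = Nat.card F + 1 := by
  rw [← C.ncard_panel halt hnd hdim hj]
  refine Set.ncard_congr (fun D _ => D.space (j + 1)) ?_ ?_ ?_
  · intro D hD
    exact hD.panel_eq ▸ D.space_mem_panel hj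
  · intro D D' hD hD' h
    exact (hD.trans hD'.symm).eq_of_space_eq h
  · intro U hU
    obtain ⟨D, hD, rfl⟩ := C.exists_adj_space_eq halt hj hU
    exact ⟨D, hD, rfl⟩

end Chamber

end Chambers

/-! ### Counting chains -/

section Chains

variable {α : Type*} {a : α} {R : ℕ → α → α → Prop} {n : ℕ}

/-- The chains `a = c 0, c 1, …, c n` with `R r (c r) (c (r + 1))` for all `r < n`, encoded as
sequences that are constant equal to `a` from position `n + 1` on. -/
def chains (R : ℕ → α → α → Prop) (a : α) (n : ℕ) : Set (ℕ → α) :=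
  {c | c 0 = a ∧ (∀ r < n, R r (c r) (c (r + 1))) ∧ ∀ r, n < r → c r = a}

lemma chains_zero : chains R a 0 = {fun _ => a} := by
  ext c
  refine ⟨fun ⟨h0, _, h⟩ => funext fun r => ?_, by rintro rfl; simp [chains]⟩
  exact r.eq_zero_or_pos.elim (fun hr => hr ▸ h0) (h r)

lemma update_mem_chains {c : ℕ → α} (hc : c ∈ chains R a (n + 1)) :
    Function.update c (n + 1) a ∈ chains R a n := by
  obtain ⟨h0, hR, h⟩ := hc
  refine ⟨by simpa using h0, fun r hr => ?_, fun r hr => ?_⟩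
  · rw [Function.update_of_ne (by lia), Function.update_of_ne (by lia)]
    exact hR r (by lia)
  · obtain rfl | hne := eq_or_ne r (n + 1)
    · exact Function.update_self ..
    · rw [Function.update_of_ne hne, h r (by lia)]

lemma update_mem_chains_succ {c : ℕ → α} (hc : c ∈ chains R a n) {y : α} (hy : R n (c n) y) :
    Function.update c (n + 1) y ∈ chains R a (n + 1) := by
  obtain ⟨h0, hR, h⟩ := hc
  refine ⟨by simpa using h0, fun r hr => ?_, fun r hr => ?_⟩
  · rw [Function.update_of_ne (by lia)]
    obtain rfl | hne := eq_or_ne r n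
    · rwa [Function.update_self]
    · rw [Function.update_of_ne (by lia)]
      exact hR r (by lia)
  · rw [Function.update_of_ne (by lia), h r (by lia)]

/-- Splitting off the last entry of a chain. -/
noncomputable def chainsSuccEquiv (R : ℕ → α → α → Prop) (a : α) (n : ℕ) :
    chains R a (n + 1) ≃ Σ c : chains R a n, {y | R n (c.1 n) y} where
  toFun c := ⟨⟨Function.update c.1 (n + 1) a, update_mem_chains c.2⟩,
    ⟨c.1 (n + 1), by simpa using c.2.2.1 n n.lt_succ_self⟩⟩
  invFun p := ⟨Function.update p.1.1 (n + 1) p.2.1, update_mem_chains_succ p.1.2 p.2.2⟩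
  left_inv c := by simp
  right_inv p := by
    have hp : Function.update p.1.1 (n + 1) a = p.1.1 :=
      Function.update_eq_self_iff.mpr (p.1.2.2.2 (n + 1) n.lt_succ_self).symm
    obtain ⟨⟨c, hc⟩, y, hy⟩ := p
    ext <;> simp_all

theorem ncard_chains [Finite α] {f : ℕ → ℕ} {I : ℕ → α → Prop} (h_zero : I 0 a)
    (h_succ : ∀ r < n, ∀ x y, I r x → R r x y → I (r + 1) y)
    (hf : ∀ r < n, ∀ x, I r x → {y | R r x y}.ncard = f r) :
    (chains R a n).ncard = ∏ r ∈ Finset.range n, f r := by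
  induction n with
  | zero => rw [chains_zero, Set.ncard_singleton, Finset.prod_range_zero]
  | succ n ih =>
    have hI (c : chains R a n) (r : ℕ) (hr : r ≤ n) : I r (c.1 r) := by
      obtain ⟨c, h0, hR, _⟩ := c
      induction r with
      | zero => exact h0 ▸ h_zero
      | succ r ihr => exact h_succ r (by lia) _ _ (ihr (by lia)) (hR r hr)
    have hcard (c : chains R a n) : Nat.card {y | R n (c.1 n) y} = f n :=
      hf n n.lt_succ_self _ (hI c n le_rfl)
    have e : chains R a (n + 1) ≃ chains R a n × Fin (f n) :=
      (chainsSuccEquiv R a n).trans <|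
        (Equiv.sigmaCongrRight fun c => Finite.equivFinOfCardEq (hcard c)).trans <|
        Equiv.sigmaEquivProd _ _
    rw [← Nat.card_coe_set_eq, Nat.card_congr e, Nat.card_prod, Nat.card_fin, Nat.card_coe_set_eq,
      ih (fun r hr => h_succ r (by lia)) (fun r hr => hf r (by lia)), Finset.prod_range_succ]

end Chains

/-! ### Counting chambers through a subspace -/

section CountingChambers

variable {F V : Type} [Field F] [AddCommGroup V] [Module F V]
  {B : V →ₗ[F] V →ₗ[F] F} {S E : Submodule F V} {n r : ℕ}
  {p : ℕ → Submodule F V → Prop}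

/-- The subspace that has to contain the entry `r + 1` of a chamber through `S` with entry `E` in
position `r`. -/
noncomputable def stepBound (B : V →ₗ[F] V →ₗ[F] F) (S : Submodule F V) (r : ℕ)
    (E : Submodule F V) : Submodule F V :=
  if r < finrank F S then S else bperp B E

/-- The dimension of the quotient of `stepBound B S r E` by the `r`-space `E`, where `S` has
dimension `s` and the polar space has rank `n`. -/
def stepCodim (n s r : ℕ) : ℕ := if r < s then s - r else 2 * (n - r)

lemma stepBound_of_lt (h : r < finrank F S) : stepBound B S r E = S := if_pos h

lemma stepBound_of_le (h : finrank F S ≤ r) : stepBound B S r E = bperp B E := if_neg h.not_gt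

/-- Entry `r` of a chamber through `S` subject to the condition `p r`. -/
structure IsEntryThrough (B : V →ₗ[F] V →ₗ[F] F) (S : Submodule F V)
    (p : ℕ → Submodule F V → Prop) (r : ℕ) (E : Submodule F V) : Prop where
  finrank_eq : finrank F E = r
  le_bperp : E ≤ bperp B E
  le_of_le : r ≤ finrank F S → E ≤ S
  prop : p r E

lemma IsEntryThrough.le_stepBound (hE : IsEntryThrough B S p r E) : E ≤ stepBound B S r E := by
  obtain h | h := lt_or_ge r (finrank F S)
  · exact (hE.le_of_le h.le).trans_eq (stepBound_of_lt h).symm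
  · exact hE.le_bperp.trans_eq (stepBound_of_le h).symm

variable [FiniteDimensional F V]

lemma finrank_stepBound (halt : IsAltForm B) (hnd : NondegForm B) (hdim : finrank F V = 2 * n)
    (hr : r ≤ n) (hE : finrank F E = r) :
    finrank F (stepBound B S r E) = r + stepCodim n (finrank F S) r := by
  obtain h | h := lt_or_ge r (finrank F S)
  · rw [stepBound_of_lt h, stepCodim, if_pos h]
    lia
  · have := finrank_bperp halt hnd (W := E)
    rw [stepBound_of_le h, stepCodim, if_neg h.not_gt]
    lia

lemma finrank_stepBound_inf_bperp (halt : IsAltForm B) (hnd : NondegForm B)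
    (hdim : finrank F V = 2 * n) (hs : finrank F S ≤ n) {C : Chamber B n} (hr : r < n)
    (hSC : bperp B (C.space (finrank F S)) ⊓ S = ⊥) (hE : finrank F E = r)
    (hEC : E ⊓ bperp B (C.space r) = ⊥) :
    finrank F (stepBound B S r E ⊓ bperp B (C.space (r + 1)) : Submodule F V) + 1 =
      stepCodim n (finrank F S) r := by
  have hperp : bperp B (stepBound B S r E) ⊓ C.space (r + 1) = ⊥ := by
    obtain h | h := lt_or_ge r (finrank F S)
    · have hCS : bperp B S ⊓ C.space (finrank F S) = ⊥ := by
        have := finrank_bperp_inf_add_finrank halt hnd (X := C.space (finrank F S)) (Y := S)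
        rw [hSC, C.finrank_space hs, finrank_bot, Nat.add_right_cancel_iff] at this
        exact Submodule.finrank_eq_zero.mp this.symm
      rw [stepBound_of_lt h]
      exact le_bot_iff.mp ((inf_le_inf_left _ (C.space_mono h hs)).trans_eq hCS)
    · rw [stepBound_of_le h, bperp_bperp halt hnd]
      exact le_bot_iff.mp ((inf_le_inf_left _ (C.space_le_bperp hr hr.le)).trans_eq hEC)
  have := finrank_bperp_inf_add_finrank halt hnd (X := C.space (r + 1)) (Y := stepBound B S r E)
  rw [hperp, finrank_bot, C.finrank_space hr, finrank_stepBound halt hnd hdim hr.le hE] at this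
  rw [inf_comm]
  lia

section Alternating

variable (halt : IsAltForm B) (hS : IsTotIso B S)
include halt hS

lemma IsEntryThrough.succ {U : Submodule F V} (hE : IsEntryThrough B S p r E) (hEU : E ⋖ U)
    (hU : U ≤ stepBound B S r E) (hp : p (r + 1) U) :
    IsEntryThrough B S p (r + 1) U ∧ U ≤ bperp B E := by
  have hSS : S ≤ bperp B S := isTotIso_iff_le_bperp.mp hS
  have hUE : U ≤ bperp B E := by
    obtain h | h := lt_or_ge r (finrank F S)
    · exact (hU.trans_eq (stepBound_of_lt h)).trans (hSS.trans (bperp_anti (hE.le_of_le h.le)))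
    · exact hU.trans_eq (stepBound_of_le h)
  refine ⟨⟨by rw [(covBy_iff_finrank.mp hEU).2, hE.finrank_eq],
    le_bperp_of_covBy halt hE.le_bperp hEU hUE, fun h => ?_, hp⟩, hUE⟩
  exact hU.trans_eq (stepBound_of_lt h)

lemma image_space_eq_chains (hs : finrank F S ≤ n) (hp : p 0 ⊥) :
    SFlag.space '' {C : Chamber B n | C.space (finrank F S) = S ∧ ∀ i ≤ n, p i (C.space i)} =
      chains (fun r E U => E ⋖ U ∧ U ≤ stepBound B S r E ∧ p (r + 1) U) ⊥ n := by
  ext c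
  constructor
  · rintro ⟨(C : Chamber B n), ⟨hCS, hC⟩, rfl⟩
    refine ⟨C.space_zero, fun r hr => ⟨C.space_covBy hr, ?_, hC _ hr⟩,
      fun r hr => C.eq_bot r fun h => hr.not_ge (Finset.mem_Icc.mp h).2⟩
    obtain h | h := lt_or_ge r (finrank F S)
    · rw [stepBound_of_lt h]
      exact (C.space_mono h hs).trans_eq hCS
    · rw [stepBound_of_le h]
      exact C.space_le_bperp hr hr.le
  · rintro ⟨h0, hstep, hlt⟩
    have hentry (r) (hr : r ≤ n) : IsEntryThrough B S p r (c r) := by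
      induction r with
      | zero => exact h0 ▸ ⟨finrank_bot F V, bot_le, fun _ => bot_le, hp⟩
      | succ r ih =>
        obtain ⟨hcov, hle, hp⟩ := hstep r hr
        exact ((ih (by lia)).succ halt hS hcov hle hp).1
    obtain ⟨C, rfl⟩ := Chamber.exists_space_eq (n := n) halt h0 (fun r hr => by
      obtain ⟨hcov, hle, hp⟩ := hstep r hr
      exact ⟨hcov, ((hentry r hr.le).succ halt hS hcov hle hp).2⟩) hlt
    have hCS := hentry (finrank F S) hs
    exact ⟨C, ⟨Submodule.eq_of_le_of_finrank_eq (hCS.le_of_le le_rfl) hCS.finrank_eq,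
      fun i hi => (hentry i hi).prop⟩, rfl⟩

lemma ncard_chambers_through [Finite F] (hs : finrank F S ≤ n) (hp : p 0 ⊥) {f : ℕ → ℕ}
    (hf : ∀ r < n, ∀ E, IsEntryThrough B S p r E →
      {U | E ⋖ U ∧ U ≤ stepBound B S r E ∧ p (r + 1) U}.ncard = f r) :
    {C : Chamber B n | C.space (finrank F S) = S ∧ ∀ i ≤ n, p i (C.space i)}.ncard =
      ∏ r ∈ Finset.range n, f r := by
  have : Finite V := Module.finite_of_finite F
  have hinj : Function.Injective (SFlag.space : Chamber B n → ℕ → Submodule F V) :=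
    fun C D h => Chamber.ext fun i _ => congrFun h i
  rw [← Set.ncard_image_of_injective _ hinj, image_space_eq_chains halt hS hs hp]
  exact ncard_chains (I := IsEntryThrough B S p) ⟨finrank_bot F V, bot_le, fun _ => bot_le, hp⟩
    (fun r _ E U hE hU => (hE.succ halt hS hU.1 hU.2.1 hU.2.2).1) hf

variable [Finite F] (hnd : NondegForm B) (hdim : finrank F V = 2 * n) (hs : finrank F S ≤ n)
include hnd hdim hs

theorem ncard_space_eq :
    {C : Chamber B n | C.space (finrank F S) = S}.ncard =
      ∏ r ∈ Finset.range n, ∑ i ∈ Finset.range (stepCodim n (finrank F S) r), Nat.card F ^ i := by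
  have := ncard_chambers_through (p := fun _ _ => True) halt hS hs trivial
    (f := fun r => ∑ i ∈ Finset.range (stepCodim n (finrank F S) r), Nat.card F ^ i)
    fun r hr E hE => by
      simpa only [and_true] using ncard_covBy_le hE.le_stepBound
        (hE.finrank_eq.symm ▸ finrank_stepBound halt hnd hdim hr.le hE.finrank_eq)
  simpa only [implies_true, and_true] using this

theorem ncard_flagOpp_space_eq {C : Chamber B n}
    (hSC : bperp B (C.space (finrank F S)) ⊓ S = ⊥) :
    {D : Chamber B n | D.space (finrank F S) = S ∧ FlagOpp C D}.ncard =
      Nat.card F ^ ∑ r ∈ Finset.range n, (stepCodim n (finrank F S) r - 1) := by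
  have hopp (D : Chamber B n) : FlagOpp C D ↔ ∀ i ≤ n, D.space i ⊓ bperp B (C.space i) = ⊥ := by
    simp only [Chamber.flagOpp_iff, inf_comm]
  have := ncard_chambers_through (p := fun i U => U ⊓ bperp B (C.space i) = ⊥) halt hS hs
    (bot_inf_eq _) (f := fun r => Nat.card F ^ (stepCodim n (finrank F S) r - 1))
    fun r hr E hE => by
      have hEC : E ⊓ bperp B (C.space (r + 1)) = ⊥ := le_bot_iff.mp <|
        (inf_le_inf_left E (bperp_anti (C.space_mono r.le_succ hr))).trans_eq hE.prop
      have hdimK := finrank_stepBound_inf_bperp halt hnd hdim hs hr hSC hE.finrank_eq hE.prop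
      refine ncard_covBy_le_inf_eq_bot hE.le_stepBound hEC (by lia) ?_
      rw [finrank_stepBound halt hnd hdim hr.le hE.finrank_eq, hE.finrank_eq]
      lia
  simpa only [hopp, Finset.prod_pow_eq_pow_sum] using this

end Alternating

end CountingChambers

/-! ### Matrices of relations -/

section RelMatrix

variable {α : Type*} {R S : α → α → Prop}

/-- The 0-1 matrix of a relation. -/
noncomputable def relMatrix (R : α → α → Prop) : Matrix α α ℝ :=
  Matrix.of fun a b => if R a b then 1 else 0

lemma relMatrix_apply (a b : α) : relMatrix R a b = if R a b then 1 else 0 := rfl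

lemma relMatrix_eq_one : relMatrix (α := α) Eq = 1 := rfl

lemma relMatrix_transpose (hR : ∀ a b, R a b → R b a) : (relMatrix R).transpose = relMatrix R := by
  ext a b
  simp only [Matrix.transpose_apply, relMatrix_apply, (⟨hR a b, hR b a⟩ : R a b ↔ R b a)]

variable [Fintype α]

lemma relMatrix_mulVec_indicator (U : Set α) (a : α) :
    (relMatrix R).mulVec (U.indicator 1) a = {b ∈ U | R a b}.ncard := by
  rw [Set.ncard_eq_toFinset_card', Finset.card_eq_sum_ones, Set.toFinset_ofPred]
  simp [Matrix.mulVec, dotProduct, relMatrix_apply, Finset.sum_ite, Set.indicator_apply,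
    Finset.filter_filter, and_comm]

lemma relMatrix_mul_apply (a c : α) :
    (relMatrix R * relMatrix S) a c = {b | R a b ∧ S b c}.ncard := by
  rw [Set.ncard_eq_toFinset_card', Set.toFinset_ofPred]
  simp [Matrix.mul_apply, relMatrix_apply, ← ite_and, and_comm]

lemma relMatrix_mul_of_unique
    (h : ∀ a b b' c, R a b → S b c → R a b' → S b' c → b = b') :
    relMatrix R * relMatrix S = relMatrix (Relation.Comp R S) := by
  ext a c
  rw [relMatrix_mul_apply, relMatrix_apply]
  split_ifs with hac
  · obtain ⟨b, hab, hbc⟩ := hac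
    have : {b | R a b ∧ S b c} = {b} :=
      Set.eq_singleton_iff_unique_mem.mpr ⟨⟨hab, hbc⟩, fun b' hb' => h a b' b c hb'.1 hb'.2 hab hbc⟩
    rw [this, Set.ncard_singleton, Nat.cast_one]
  · have : {b | R a b ∧ S b c} = ∅ :=
      Set.eq_empty_of_forall_notMem fun b hb => hac ⟨b, hb⟩
    rw [this, Set.ncard_empty, Nat.cast_zero]

end RelMatrix

section PanelMatrix

variable {F V : Type} [Field F] [AddCommGroup V] [Module F V] {B : V →ₗ[F] V →ₗ[F] F} {n i j : ℕ}

/-- The matrix recording the distinct chambers with a common panel of cotype `j`: the Hecke algebra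
generator of the `j`-th simple reflection. -/
noncomputable def panelMatrix (B : V →ₗ[F] V →ₗ[F] F) (n j : ℕ) :
    Matrix (Chamber B n) (Chamber B n) ℝ :=
  relMatrix (Chamber.Adj j) - 1

lemma panelMatrix_transpose (j : ℕ) : (panelMatrix B n j).transpose = panelMatrix B n j := by
  rw [panelMatrix, Matrix.transpose_sub, relMatrix_transpose fun _ _ h => h.symm,
    Matrix.transpose_one]

variable [FiniteDimensional F V] (halt : IsAltForm B)
include halt

lemma Chamber.comp_adj_le {C D : Chamber B n} (hj : j < n) (hij : i + 1 < j ∨ j + 1 < i)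
    (h : Relation.Comp (Adj (i + 1)) (Adj (j + 1)) C D) :
    Relation.Comp (Adj (j + 1)) (Adj (i + 1)) C D := by
  obtain ⟨X, hCX, hXD⟩ := h
  have hpanel : C.panel j = X.panel j := by
    simp only [panel, ceiling, hCX j (by lia), hCX (j + 2) (by lia)]
  obtain ⟨Y, hYC, hY⟩ := C.exists_adj_space_eq halt hj
    (hpanel ▸ hXD.panel_eq ▸ D.space_mem_panel hj)
  refine ⟨Y, hYC.symm, fun k hk => ?_⟩
  obtain rfl | hkj := eq_or_ne k (j + 1)
  · exact hY
  · rw [hYC k hkj, hCX k hk, hXD k hkj]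

variable [Fintype (Chamber B n)]

lemma panelMatrix_commute (hij : i + 1 < j) (hj : j < n) :
    Commute (panelMatrix B n (i + 1)) (panelMatrix B n (j + 1)) := by
  have hunique {i j : ℕ} (hij : i ≠ j) (C X X' D : Chamber B n) (h : Chamber.Adj i C X)
      (hX : Chamber.Adj j X D) (h' : Chamber.Adj i C X') (hX' : Chamber.Adj j X' D) : X = X' :=
    (h.symm.trans h').eq_of_space_eq ((hX.trans hX'.symm) i hij)
  have hcomp : Relation.Comp (Chamber.Adj (B := B) (n := n) (i + 1)) (Chamber.Adj (j + 1)) =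
      Relation.Comp (Chamber.Adj (j + 1)) (Chamber.Adj (i + 1)) :=
    funext₂ fun C D => propext ⟨Chamber.comp_adj_le halt hj (Or.inl hij),
      Chamber.comp_adj_le halt (by lia) (Or.inr hij)⟩
  have hcomm : Commute (relMatrix (Chamber.Adj (B := B) (n := n) (i + 1)))
      (relMatrix (Chamber.Adj (j + 1))) := by
    rw [Commute, SemiconjBy, relMatrix_mul_of_unique (hunique (by lia)),
      relMatrix_mul_of_unique (hunique (by lia)), hcomp]
  exact (hcomm.sub_left (Commute.one_left _)).sub_right (Commute.one_right _)

variable [Finite F] (hnd : NondegForm B) (hdim : finrank F V = 2 * n)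
include hnd hdim

lemma relMatrix_mul_panelMatrix_eq_smul {K : Chamber B n → Chamber B n → Prop} (hj : j < n)
    (hK : ∀ C D D', Chamber.Adj (j + 1) D D' → K C D → K C D') :
    relMatrix K * panelMatrix B n (j + 1) = (Nat.card F : ℝ) • relMatrix K := by
  have hmul : relMatrix K * relMatrix (Chamber.Adj (j + 1)) =
      (Nat.card F + 1 : ℝ) • relMatrix K := by
    ext C D
    rw [relMatrix_mul_apply, Matrix.smul_apply, relMatrix_apply]
    split_ifs with hCD
    · have : {X | K C X ∧ Chamber.Adj (j + 1) X D} = {X | Chamber.Adj (j + 1) X D} :=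
        Set.ext fun X => and_iff_right_of_imp fun hX => hK C D X hX.symm hCD
      rw [this, D.ncard_adj halt hnd hdim hj, smul_eq_mul, mul_one, Nat.cast_succ]
    · have : {X | K C X ∧ Chamber.Adj (j + 1) X D} = ∅ :=
        Set.eq_empty_of_forall_notMem fun X hX => hCD (hK C X D hX.2 hX.1)
      rw [this, Set.ncard_empty, Nat.cast_zero, smul_zero]
  rw [panelMatrix, mul_sub, hmul, mul_one, add_smul, one_smul, add_sub_cancel_right]

lemma isHecke_panelMatrix (hj : j < n) :
    IsHecke (Nat.card F : ℝ) (panelMatrix B n (j + 1)) := by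
  have h := relMatrix_mul_panelMatrix_eq_smul halt hnd hdim hj
    (K := Chamber.Adj (j + 1)) fun _ _ _ hD hC => hC.trans hD
  rw [← sub_add_cancel (relMatrix (Chamber.Adj (j + 1))) 1, ← panelMatrix, add_mul, one_mul,
    smul_add] at h
  rw [IsHecke, eq_sub_of_add_eq h]
  module

end PanelMatrix

/-! ### Panels and the relations defined entry by entry -/

section ModularLattice

variable {α : Type*} [Lattice α] [IsModularLattice α] {a c e g p q u u₀ : α}

lemma covBy_sup_of_inf_eq (hpe : p ⊓ e = c) (hca : c ⋖ a) (hap : a ≤ p) : e ⋖ e ⊔ a := by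
  refine covBy_sup_of_inf_covBy_right ?_
  have : e ⊓ a = c := le_antisymm (hpe ▸ le_inf (inf_le_right.trans hap) inf_le_left)
    (le_inf (hpe ▸ inf_le_right) hca.le)
  rwa [this]

lemma inf_eq_iff_eq_sup (hpe : p ⊓ e = c) (hca : c ⋖ a) (hap : a ≤ p) (heu : e ⋖ u) :
    p ⊓ u = a ↔ u = e ⊔ a := by
  constructor
  · intro h
    refine ((heu.eq_or_eq le_sup_left (sup_le heu.le (h ▸ inf_le_right))).resolve_left ?_).symm
    exact (covBy_sup_of_inf_eq hpe hca hap).lt.ne'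
  · rintro rfl
    rw [sup_comm, inf_comm, sup_inf_assoc_of_le e hap, inf_comm, hpe, sup_eq_left.mpr hca.le]

omit [IsModularLattice α] in
lemma inf_eq_iff_ne (hqe : q ⊓ e = c) (heu₀ : e ⋖ u₀) (hqg : q ⊓ g ≤ u₀) (hne : q ⊓ u₀ ≠ c)
    (heu : e ⋖ u) (hug : u ≤ g) : q ⊓ u = c ↔ u ≠ u₀ := by
  refine ⟨fun h hu => hne (hu ▸ h), fun hu => ?_⟩
  have hinf : u ⊓ u₀ = e :=
    (heu.eq_or_eq (le_inf heu.le heu₀.le) inf_le_left).resolve_right fun h =>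
      hu ((heu₀.eq_or_eq heu.le (inf_eq_left.mp h)).resolve_left heu.lt.ne')
  refine le_antisymm ?_ (hqe ▸ inf_le_inf_left q heu.le)
  calc q ⊓ u ≤ q ⊓ (u ⊓ u₀) :=
        le_inf inf_le_left (le_inf inf_le_right ((inf_le_inf_left q hug).trans hqg))
    _ = c := by rw [hinf, hqe]

lemma exists_covBy_forall_inf_eq_iff (hpe : p ⊓ e = c) (hca : c ⋖ a) (haq : a ≤ q) (hqp : q ≤ p)
    (heg : e ≤ g) (hag : a ≤ g) (hqg : q ⊓ g ≤ e ⊔ a) : ∃ u₀ ∈ {u | e ⋖ u ∧ u ≤ g},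
      ∀ u ∈ {u | e ⋖ u ∧ u ≤ g}, (p ⊓ u = a ↔ u = u₀) ∧ (q ⊓ u = c ↔ u ≠ u₀) := by
  have hcov : e ⋖ e ⊔ a := covBy_sup_of_inf_eq hpe hca (haq.trans hqp)
  have hqe : q ⊓ e = c := le_antisymm (hpe ▸ inf_le_inf_right e hqp)
    (le_inf (hca.le.trans haq) (hpe ▸ inf_le_right))
  have hne : q ⊓ (e ⊔ a) ≠ c := (hca.lt.trans_le (le_inf haq le_sup_right)).ne'
  exact ⟨e ⊔ a, ⟨hcov, sup_le heg hag⟩, fun u hu =>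
    ⟨inf_eq_iff_eq_sup hpe hca (haq.trans hqp) hu.1, inf_eq_iff_ne hqe hcov hqg hne hu.1 hu.2⟩⟩

end ModularLattice

section Entrywise

variable {F V : Type} [Field F] [AddCommGroup V] [Module F V] {B : V →ₗ[F] V →ₗ[F] F}
  {n j : ℕ} {C D : Chamber B n} {ρ σ : Chamber B n → ℕ → Submodule F V → Prop}

/-- The relation between chambers `C` and `D` that imposes on each entry `U = D_i` of `D` the
condition `ρ C i U`. -/
def Entrywise (ρ : Chamber B n → ℕ → Submodule F V → Prop) (C D : Chamber B n) : Prop :=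
  ∀ i ≤ n, ρ C i (D.space i)

/-- The relation defined by the conditions `ρ C i U` in positions `i` other than `j`. -/
def EntrywiseOff (j : ℕ) (ρ : Chamber B n → ℕ → Submodule F V → Prop) :
    Chamber B n → Chamber B n → Prop :=
  Entrywise fun C i U => i ≠ j → ρ C i U

lemma EntrywiseOff.of_adj {D' : Chamber B n} (h : EntrywiseOff j ρ C D)
    (hD : Chamber.Adj j D D') : EntrywiseOff j ρ C D' :=
  fun i hi hij => hD i hij ▸ h i hi hij

lemma EntrywiseOff.congr (h : ∀ C U, ∀ i ≤ n, i ≠ j → (ρ C i U ↔ σ C i U)) :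
    EntrywiseOff (n := n) j ρ = EntrywiseOff j σ :=
  funext₂ fun C _ => propext <| forall₂_congr fun i hi => imp_congr_right (h C _ i hi)

lemma entrywise_iff (hj : j ≤ n) : Entrywise ρ C D ↔ EntrywiseOff j ρ C D ∧ ρ C j (D.space j) :=
  ⟨fun h => ⟨fun i hi _ => h i hi, h j hj⟩, fun h i hi =>
    if hij : i = j then hij ▸ h.2 else h.1 i hi hij⟩

variable [FiniteDimensional F V] [Fintype (Chamber B n)] (halt : IsAltForm B) (hj : j < n)
include halt hj

lemma relMatrix_entrywise_mul_relMatrix_adj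
    (hpanel : ∀ C D, EntrywiseOff (j + 1) ρ C D →
      ∃ U₀ ∈ D.panel j, ∀ U ∈ D.panel j, (ρ C (j + 1) U ↔ U = U₀)) :
    relMatrix (Entrywise ρ) * relMatrix (Chamber.Adj (j + 1)) =
      relMatrix (EntrywiseOff (j + 1) ρ) := by
  have hcomp : Relation.Comp (Entrywise ρ) (Chamber.Adj (j + 1)) = EntrywiseOff (j + 1) ρ := by
    refine funext₂ fun C D => propext ⟨?_, fun h => ?_⟩
    · rintro ⟨X, hCX, hXD⟩
      exact ((entrywise_iff hj).mp hCX).1.of_adj hXD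
    · obtain ⟨U₀, hU₀, hU⟩ := hpanel C D h
      obtain ⟨X, hXD, rfl⟩ := D.exists_adj_space_eq halt hj hU₀
      exact ⟨X, (entrywise_iff hj).mpr ⟨h.of_adj hXD.symm, (hU _ hU₀).mpr rfl⟩, hXD⟩
  rw [relMatrix_mul_of_unique, hcomp]
  intro C X X' D hCX hXD hCX' hXD'
  obtain ⟨U₀, -, hU⟩ := hpanel C D (((entrywise_iff hj).mp hCX).1.of_adj hXD)
  have hspace {Y} (hCY : Entrywise ρ C Y) (hYD : Chamber.Adj (j + 1) Y D) :
      Y.space (j + 1) = U₀ :=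
    (hU _ (hYD.panel_eq ▸ Y.space_mem_panel hj)).mp (hCY (j + 1) hj)
  exact (hXD.trans hXD'.symm).eq_of_space_eq ((hspace hCX hXD).trans (hspace hCX' hXD').symm)

lemma relMatrix_entrywise_mul_panelMatrix
    (hρσ : ∀ C U, ∀ i ≤ n, i ≠ j + 1 → (ρ C i U ↔ σ C i U))
    (hpanel : ∀ C D, EntrywiseOff (j + 1) ρ C D → ∃ U₀ ∈ D.panel j, ∀ U ∈ D.panel j,
      (ρ C (j + 1) U ↔ U = U₀) ∧ (σ C (j + 1) U ↔ U ≠ U₀)) :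
    relMatrix (Entrywise ρ) * panelMatrix B n (j + 1) = relMatrix (Entrywise σ) := by
  have hoff : EntrywiseOff (j + 1) ρ = EntrywiseOff (j + 1) σ := EntrywiseOff.congr hρσ
  rw [panelMatrix, mul_sub, mul_one, relMatrix_entrywise_mul_relMatrix_adj halt hj fun C D h =>
    (hpanel C D h).imp fun U₀ hU => ⟨hU.1, fun U hU' => (hU.2 U hU').1⟩]
  ext C D
  simp only [Matrix.sub_apply, relMatrix_apply, entrywise_iff (D := D) hj, ← hoff]
  by_cases h : EntrywiseOff (j + 1) ρ C D
  · obtain ⟨U₀, -, hU⟩ := hpanel C D h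
    obtain ⟨hρ, hσ⟩ := hU _ (D.space_mem_panel hj)
    simp only [h, hρ, hσ, true_and]
    by_cases hD : D.space (j + 1) = U₀ <;> simp [hD]
  · simp [h]

lemma panelMatrix_commute_relMatrix_entrywise [Finite F] (hnd : NondegForm B)
    (hdim : finrank F V = 2 * n)
    (hsymm : ∀ C D, Entrywise σ C D → Entrywise σ D C)
    (hoff : ∀ C D, EntrywiseOff (j + 1) σ C D → EntrywiseOff (j + 1) σ D C)
    (hpanel : ∀ C D, EntrywiseOff (j + 1) σ C D →
      ∃ U₀ ∈ D.panel j, ∀ U ∈ D.panel j, (σ C (j + 1) U ↔ U ≠ U₀)) :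
    Commute (panelMatrix B n (j + 1)) (relMatrix (Entrywise σ)) := by
  let ρ (C : Chamber B n) (i : ℕ) (U : Submodule F V) : Prop :=
    if i = j + 1 then ¬ σ C i U else σ C i U
  have hρσ (C U i) (_ : i ≤ n) (hi : i ≠ j + 1) : ρ C i U ↔ σ C i U := by simp only [ρ, if_neg hi]
  have hoff_eq : EntrywiseOff (j + 1) ρ = EntrywiseOff (j + 1) σ := EntrywiseOff.congr hρσ
  have hρ : relMatrix (Entrywise ρ) =
      relMatrix (EntrywiseOff (j + 1) σ) - relMatrix (Entrywise σ) := by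
    ext C D
    simp only [Matrix.sub_apply, relMatrix_apply, entrywise_iff (D := D) hj, hoff_eq, ρ, if_true]
    by_cases EntrywiseOff (j + 1) σ C D <;> by_cases σ C (j + 1) (D.space (j + 1)) <;> simp [*]
  have hmul := relMatrix_entrywise_mul_panelMatrix halt hj hρσ fun C D h => by
    obtain ⟨U₀, hU₀, hU⟩ := hpanel C D (hoff_eq ▸ h)
    exact ⟨U₀, hU₀, fun U hU' => ⟨by simp [ρ, hU U hU'], hU U hU'⟩⟩
  have hoff_mul : relMatrix (EntrywiseOff (j + 1) σ) * panelMatrix B n (j + 1) =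
      (Nat.card F : ℝ) • relMatrix (EntrywiseOff (j + 1) σ) :=
    relMatrix_mul_panelMatrix_eq_smul halt hnd hdim hj fun _ _ _ hD h => h.of_adj hD
  rw [hρ, sub_mul, hoff_mul, sub_eq_iff_eq_add] at hmul
  have hmul' : relMatrix (Entrywise σ) * panelMatrix B n (j + 1) =
      (Nat.card F : ℝ) • relMatrix (EntrywiseOff (j + 1) σ) - relMatrix (Entrywise σ) :=
    eq_sub_of_add_eq' hmul.symm
  have htrans := congrArg Matrix.transpose hmul'
  rw [Matrix.transpose_mul, panelMatrix_transpose, Matrix.transpose_sub, Matrix.transpose_smul,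
    relMatrix_transpose hsymm, relMatrix_transpose hoff, ← hmul'] at htrans
  exact htrans

end Entrywise

/-! ### Opposition beyond a common initial part -/

section Opposition

variable {F V : Type} [Field F] [AddCommGroup V] [Module F V] {B : V →ₗ[F] V →ₗ[F] F}
  {n i j k l m : ℕ} {C D : Chamber B n} {U : Submodule F V}

/-- The condition on the entry `U` of a chamber in position `i` to agree with the entry `C_i` if
`i ≤ m`, and to be opposite to it modulo `C_m` if `i > m`. -/
def OppAbove (m : ℕ) (C : Chamber B n) (i : ℕ) (U : Submodule F V) : Prop :=
  bperp B (C.space i) ⊓ U = C.space (min i m)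

/-- The condition interpolating between `OppAbove m` (for `l = m` and `k = m + 1`) and
`OppAbove (m + 1)` (for `l = k = m + 1`) one position at a time: below position `k`, entries of the
second chamber are compared with the next entry of the first. -/
def OppShift (m l k : ℕ) (C : Chamber B n) (i : ℕ) (U : Submodule F V) : Prop :=
  if i < k then bperp B (C.space (i + 1)) ⊓ U = C.space (min i m) ∧ U ≤ bperp B (C.space (m + 1))
  else bperp B (C.space i) ⊓ U = C.space (min i l)

lemma oppShift_iff_of_lt (hmi : m ≤ i) (hik : i < k) : OppShift m l k C i U ↔
    bperp B (C.space (i + 1)) ⊓ U = C.space m ∧ U ≤ bperp B (C.space (m + 1)) := by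
  rw [OppShift, if_pos hik, min_eq_right hmi]

lemma oppShift_iff_of_le (hli : l ≤ i) (hki : k ≤ i) :
    OppShift m l k C i U ↔ bperp B (C.space i) ⊓ U = C.space l := by
  rw [OppShift, if_neg hki.not_gt, min_eq_right hli]

variable [FiniteDimensional F V]

lemma bperp_inf_space_eq_iff (hik : i ≤ k) (hk : k ≤ n) :
    bperp B (C.space k) ⊓ D.space i = C.space i ↔ D.space i = C.space i := by
  constructor
  · intro h
    refine (Submodule.eq_of_le_of_finrank_eq (h ▸ inf_le_right) ?_).symm
    rw [C.finrank_space (hik.trans hk), D.finrank_space (hik.trans hk)]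
  · intro h
    rw [h, inf_eq_right]
    exact C.space_le_bperp (hik.trans hk) hk

lemma oppAbove_iff_of_le (him : i ≤ m) (hi : i ≤ n) :
    OppAbove m C i (D.space i) ↔ D.space i = C.space i := by
  rw [OppAbove, min_eq_left him, bperp_inf_space_eq_iff le_rfl hi]

lemma OppAbove.symm (halt : IsAltForm B) (hnd : NondegForm B) (hi : i ≤ n)
    (hm : D.space (min i m) = C.space (min i m)) (h : OppAbove m C i (D.space i)) :
    OppAbove m D i (C.space i) := by
  have hrank := finrank_bperp_inf_add_finrank halt hnd (X := C.space i) (Y := D.space i)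
  rw [h, C.finrank_space hi, D.finrank_space hi] at hrank
  refine (Submodule.eq_of_le_of_finrank_eq (le_inf ?_ ?_) ?_).symm
  · exact D.space_le_bperp (by lia) hi
  · exact hm ▸ C.space_mono (by lia) hi
  · rw [hm]
    lia

lemma bperp_inf_space_eq_of_le (halt : IsAltForm B) (hnd : NondegForm B) (hmk : m ≤ k)
    (hki : k ≤ i) (hi : i ≤ n) (hm : D.space m = C.space m)
    (h : bperp B (C.space i) ⊓ D.space i = C.space m) :
    bperp B (D.space i) ⊓ C.space k = C.space m := by
  have him : min i m = m := min_eq_right (hmk.trans hki)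
  have h' : bperp B (D.space i) ⊓ C.space i = D.space (min i m) :=
    OppAbove.symm halt hnd hi (by rwa [him]) (by rwa [OppAbove, him])
  rw [him, hm] at h'
  refine le_antisymm (h' ▸ inf_le_inf_left _ (C.space_mono hki hi)) (le_inf ?_ ?_)
  · exact h' ▸ inf_le_left
  · exact C.space_mono hmk (hki.trans hi)

lemma covBy_bperp_inf_space (halt : IsAltForm B) (hnd : NondegForm B) (hmj : m ≤ j)
    (hj : j + 1 < n) (hm : D.space m = C.space m)
    (hG : bperp B (C.space (j + 2)) ⊓ D.space (j + 2) = C.space m)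
    (hEC : D.space j ≤ bperp B (C.space (m + 1))) :
    D.space j ⋖ bperp B (C.space (m + 1)) ⊓ D.space (j + 2) := by
  refine covBy_iff_finrank.mpr ⟨le_inf hEC (D.space_mono (by lia) hj), ?_⟩
  have := finrank_bperp_inf_add_finrank halt hnd (X := C.space (m + 1)) (Y := D.space (j + 2))
  rw [bperp_inf_space_eq_of_le halt hnd m.le_succ (by lia) hj hm hG, C.finrank_space (by lia),
    C.finrank_space (by lia), D.finrank_space hj] at this
  rw [D.finrank_space (by lia)]
  lia

lemma bperp_inf_ne_space (halt : IsAltForm B) (hnd : NondegForm B) (hmk : m < k) (hk : k ≤ n)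
    (hrank : finrank F U = k) (hU : U ≤ bperp B (C.space (m + 1))) :
    bperp B (C.space k) ⊓ U ≠ C.space m := by
  intro heq
  have hswap := finrank_bperp_inf_add_finrank halt hnd (X := C.space k) (Y := U)
  have hle : C.space (m + 1) ≤ bperp B U ⊓ C.space k :=
    le_inf ((le_bperp_comm halt).mp hU) (C.space_mono hmk hk)
  have hmono := Submodule.finrank_mono hle
  rw [heq, hrank, C.finrank_space hk, C.finrank_space (by lia)] at hswap
  rw [C.finrank_space (by lia)] at hmono
  lia

lemma entrywise_oppAbove_self : Entrywise (OppAbove (B := B) (n := n) n) = Eq := by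
  refine funext₂ fun C D => propext ⟨fun h => Chamber.ext fun i hi => ?_, ?_⟩
  · exact ((oppAbove_iff_of_le hi hi).mp (h i hi)).symm
  · rintro rfl i hi
    exact (oppAbove_iff_of_le hi hi).mpr rfl

omit [FiniteDimensional F V] in
lemma entrywise_oppAbove_zero : Entrywise (OppAbove (B := B) (n := n) 0) = FlagOpp := by
  refine funext₂ fun C D => propext ?_
  simp only [Entrywise, OppAbove, Nat.min_zero, C.space_zero, Chamber.flagOpp_iff]

lemma entrywise_oppShift_succ (hml : m ≤ l) (hm : m < n) :
    Entrywise (OppShift (B := B) (n := n) m l (m + 1)) = Entrywise (OppAbove l) := by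
  refine funext₂ fun C D => propext <| forall₂_congr fun i hi => ?_
  obtain him | him := lt_or_ge i (m + 1)
  · rw [OppShift, if_pos him, oppAbove_iff_of_le (by lia) hi, min_eq_left (by lia),
      bperp_inf_space_eq_iff (by lia) (by lia)]
    exact and_iff_left_of_imp fun h => h ▸ C.space_le_bperp hi hm
  · rw [OppShift, if_neg him.not_gt, OppAbove]

variable [Fintype (Chamber B n)] (halt : IsAltForm B)
include halt

lemma relMatrix_oppShift_mul_panelMatrix_ascending (hmj : m ≤ j) (hj : j + 1 < n) :
    relMatrix (Entrywise (OppShift m (m + 1) (j + 1))) * panelMatrix B n (j + 1) =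
      relMatrix (Entrywise (OppShift m (m + 1) (j + 2))) := by
  refine relMatrix_entrywise_mul_panelMatrix halt (by lia)
    (fun C U i _ hi => by simp only [OppShift, show i < j + 1 ↔ i < j + 2 by lia])
    fun C D h => ?_
  obtain ⟨hE, -⟩ := (oppShift_iff_of_lt hmj j.lt_succ_self).mp (h j (by lia) (by lia))
  have hG : bperp B (C.space (j + 2)) ⊓ D.space (j + 2) = C.space (m + 1) :=
    (oppShift_iff_of_le (by lia) (by lia)).mp (h (j + 2) hj (by lia))
  have hCG : C.space (m + 1) ≤ D.space (j + 2) := hG ▸ inf_le_right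
  have hceil := D.ceiling_of_lt hj
  obtain ⟨U₀, hU₀, hU⟩ := exists_covBy_forall_inf_eq_iff hE (C.space_covBy (by lia))
    (C.space_le_bperp (i := m + 1) (by lia) hj) (bperp_anti (C.space_mono (Nat.le_succ _) hj))
    (D.space_mono (i := j) (by lia) hj) hCG (hG.trans_le le_sup_right)
  rw [← hceil] at hU₀ hU
  refine ⟨U₀, hU₀, fun U hUD => ?_⟩
  rw [oppShift_iff_of_le (by lia) le_rfl, oppShift_iff_of_lt (by lia) (by lia)]
  refine ⟨(hU U hUD).1, Iff.trans (and_iff_left ?_) (hU U hUD).2⟩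
  exact (hUD.2.trans_eq hceil).trans ((D.space_le_bperp hj hj).trans (bperp_anti hCG))

variable (hnd : NondegForm B)
include hnd

lemma relMatrix_oppShift_mul_panelMatrix_last (hdim : finrank F V = 2 * n) (hmj : m ≤ j)
    (hj : j + 1 = n) :
    relMatrix (Entrywise (OppShift m (m + 1) (j + 1))) * panelMatrix B n (j + 1) =
      relMatrix (Entrywise (OppShift m m (j + 1))) := by
  refine relMatrix_entrywise_mul_panelMatrix halt (by lia)
    (fun C U i _ hi => by simp only [OppShift, if_pos (show i < j + 1 by lia)]) fun C D h => ?_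
  obtain ⟨hE, hEC⟩ := (oppShift_iff_of_lt hmj j.lt_succ_self).mp (h j (by lia) (by lia))
  have hEE : D.space j ≤ bperp B (D.space j) := D.space_le_bperp (by lia) (by lia)
  have hCE : C.space (m + 1) ≤ bperp B (D.space j) := (le_bperp_comm halt).mp hEC
  have hCj : C.space (m + 1) ≤ bperp B (C.space (j + 1)) := C.space_le_bperp (by lia) hj.le
  have hcov : D.space j ⋖ D.space j ⊔ C.space (m + 1) :=
    covBy_sup_of_inf_eq hE (C.space_covBy (by lia)) hCj
  have hself : D.space j ⊔ C.space (m + 1) = bperp B (D.space j ⊔ C.space (m + 1)) := by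
    refine Submodule.eq_of_le_of_finrank_eq
      (le_bperp_of_covBy halt hEE hcov (sup_le hEE hCE)) ?_
    have hrank := (covBy_iff_finrank.mp hcov).2
    rw [D.finrank_space (by lia)] at hrank
    have := finrank_bperp halt hnd (W := D.space j ⊔ C.space (m + 1))
    lia
  have hle : bperp B (C.space (j + 1)) ⊓ bperp B (D.space j) ≤ D.space j ⊔ C.space (m + 1) := by
    rw [hself, bperp_sup halt, inf_comm]
    exact inf_le_inf_left _ (bperp_anti (C.space_mono (by lia) hj.le))
  obtain ⟨U₀, hU₀, hU⟩ := exists_covBy_forall_inf_eq_iff hE (C.space_covBy (by lia)) hCj le_rfl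
    hEE hCE hle
  rw [← D.ceiling_of_le hj.ge] at hU₀ hU
  refine ⟨U₀, hU₀, fun U hUD => ?_⟩
  rw [oppShift_iff_of_le (by lia) le_rfl, oppShift_iff_of_le (by lia) le_rfl]
  exact hU U hUD

lemma relMatrix_oppShift_mul_panelMatrix_descending (hmj : m ≤ j) (hj : j + 1 < n) :
    relMatrix (Entrywise (OppShift m m (j + 2))) * panelMatrix B n (j + 1) =
      relMatrix (Entrywise (OppShift m m (j + 1))) := by
  refine relMatrix_entrywise_mul_panelMatrix halt (by lia)
    (fun C U i _ hi => by simp only [OppShift, show i < j + 2 ↔ i < j + 1 by lia])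
    fun C D h => ?_
  obtain ⟨hE, hEC⟩ := (oppShift_iff_of_lt hmj (by lia)).mp (h j (by lia) (by lia))
  have hG : bperp B (C.space (j + 2)) ⊓ D.space (j + 2) = C.space m :=
    (oppShift_iff_of_le (by lia) le_rfl).mp (h (j + 2) hj (by lia))
  have hm : D.space m = C.space m :=
    (bperp_inf_space_eq_iff m.le_succ (by lia)).mp
      ((oppShift_iff_of_lt le_rfl (by lia)).mp (h m (by lia) (by lia))).1
  have hCE : C.space m ≤ D.space j := hE ▸ inf_le_right
  have hcov := covBy_bperp_inf_space halt hnd hmj hj hm hG hEC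
  have hne := bperp_inf_ne_space halt hnd (k := j + 1) (Nat.lt_succ_of_le hmj) hj.le
    (by rw [(covBy_iff_finrank.mp hcov).2, D.finrank_space (by lia)]) inf_le_left
  have hceil := D.ceiling_of_lt hj
  refine ⟨_, ⟨hcov, inf_le_right.trans_eq hceil.symm⟩, fun U hUD => ?_⟩
  have hUG : U ≤ D.space (j + 2) := hUD.2.trans_eq hceil
  rw [oppShift_iff_of_lt (by lia) (by lia), oppShift_iff_of_le (by lia) le_rfl]
  refine ⟨⟨fun hU => ?_, ?_⟩, inf_eq_iff_ne hE hcov ?_ hne hUD.1 hUG⟩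
  · exact (hcov.eq_or_eq hUD.1.le (le_inf hU.2 hUG)).resolve_left hUD.1.lt.ne'
  · rintro rfl
    refine ⟨le_antisymm (hG ▸ inf_le_inf_left _ hUG) (le_inf ?_ (hCE.trans hUD.1.le)), inf_le_left⟩
    exact C.space_le_bperp (by lia) hj
  · exact inf_le_inf_right _ (bperp_anti (C.space_mono (by lia) hj.le))

variable (hdim : finrank F V = 2 * n)
include hdim

lemma relMatrix_oppShift_mul_jucysMurphy (hmk : m + k < n) :
    relMatrix (Entrywise (OppShift m (m + 1) (n - k))) *
      jucysMurphy (fun i => panelMatrix B n (n - i)) k =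
        relMatrix (Entrywise (OppShift m m (n - k))) := by
  induction k with
  | zero =>
    have := relMatrix_oppShift_mul_panelMatrix_last (m := m) (j := n - 1) halt hnd hdim
      (by lia) (by lia)
    rwa [Nat.sub_add_cancel (by lia)] at this
  | succ k ih =>
    obtain ⟨j, rfl⟩ : ∃ j, n = j + 2 + k := ⟨n - k - 2, by lia⟩
    have hj : j + 2 + k - (k + 1) = j + 1 := by lia
    rw [Nat.add_sub_cancel] at ih
    rw [jucysMurphy, hj, ← mul_assoc, ← mul_assoc,
      relMatrix_oppShift_mul_panelMatrix_ascending halt (by lia) (by lia), ih (by lia),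
      relMatrix_oppShift_mul_panelMatrix_descending halt hnd (by lia) (by lia)]

lemma jucysMurphyProd_panelMatrix (hk : k ≤ n) :
    jucysMurphyProd (fun i => panelMatrix B n (n - i)) k =
      relMatrix (Entrywise (OppAbove (n - k))) := by
  induction k with
  | zero => rw [Nat.sub_zero, entrywise_oppAbove_self, relMatrix_eq_one]; rfl
  | succ k ih =>
    have hsucc : n - (k + 1) + 1 = n - k := by lia
    have h := relMatrix_oppShift_mul_jucysMurphy halt hnd hdim (m := n - (k + 1)) (k := k) (by lia)
    rw [← hsucc, entrywise_oppShift_succ (by lia) (by lia),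
      entrywise_oppShift_succ le_rfl (by lia), hsucc] at h
    rw [jucysMurphyProd_succ, ih (by lia), h]

lemma jucysMurphyProd_panelMatrix_eq_flagOpp :
    jucysMurphyProd (fun i => panelMatrix B n (n - i)) n = relMatrix FlagOpp := by
  rw [jucysMurphyProd_panelMatrix halt hnd hdim le_rfl, Nat.sub_self, entrywise_oppAbove_zero]

omit [Fintype (Chamber B n)] in
lemma covBy_bperp_inf_ceiling (hmj : m ≤ j) (hj : j < n) (hm : D.space m = C.space m)
    (hE : bperp B (C.space (j + 1)) ⊓ D.space j = C.space m)
    (hG : j + 1 < n → bperp B (C.space (j + 2)) ⊓ D.space (j + 2) = C.space m) :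
    C.space m ⋖ bperp B (C.space (j + 1)) ⊓ D.ceiling j := by
  have hCE : C.space m ≤ D.space j := hE ▸ inf_le_right
  have hceil : bperp B (D.ceiling j) ⊓ C.space (j + 1) = C.space m := by
    obtain hlt | hle := lt_or_ge (j + 1) n
    · rw [D.ceiling_of_lt hlt]
      exact bperp_inf_space_eq_of_le halt hnd (by lia) (by lia) hlt hm (hG hlt)
    · rw [D.ceiling_of_le hle, bperp_bperp halt hnd]
      refine le_antisymm ?_ (le_inf hCE (C.space_mono (by lia) hj))
      exact hE ▸ le_inf (inf_le_right.trans (C.space_le_bperp hj hj)) inf_le_left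
  have hrank := finrank_bperp_inf_add_finrank halt hnd (X := C.space (j + 1)) (Y := D.ceiling j)
  rw [hceil, D.finrank_ceiling halt hnd hdim hj, C.finrank_space hj] at hrank
  refine covBy_iff_finrank.mpr ⟨le_inf (C.space_le_bperp (by lia) hj) ?_, by lia⟩
  exact hCE.trans ((D.space_covBy hj).le.trans (D.space_le_ceiling hj))

lemma panelMatrix_commute_oppAbove [Finite F] (hmj : m ≤ j) (hj : j < n) :
    Commute (panelMatrix B n (j + 1)) (relMatrix (Entrywise (OppAbove m))) := by
  have hoff {C D : Chamber B n} (h : EntrywiseOff (j + 1) (OppAbove m) C D) (i) (hi : i ≤ m) :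
      D.space i = C.space i :=
    (oppAbove_iff_of_le hi (by lia)).mp (h i (by lia) (by lia))
  refine panelMatrix_commute_relMatrix_entrywise halt hj hnd hdim (fun C D h i hi => ?_)
    (fun C D h i hi hij => ?_) fun C D h => ?_
  · exact (h i hi).symm halt hnd hi
      (hoff ((entrywise_iff hj).mp h).1 _ (min_le_right i m))
  · exact (h i hi hij).symm halt hnd hi (hoff h _ (min_le_right i m))
  have hOpp (i) (hmi : m ≤ i) (hi : i ≤ n) (hij : i ≠ j + 1) :
      bperp B (C.space i) ⊓ D.space i = C.space m := by
    simpa only [OppAbove, min_eq_right hmi] using h i hi hij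
  have hE : bperp B (C.space (j + 1)) ⊓ D.space j = C.space m := by
    have hj' := hOpp j hmj hj.le (by lia)
    exact le_antisymm (hj' ▸ inf_le_inf_right _ (bperp_anti (C.space_covBy hj).le))
      (le_inf (C.space_le_bperp (by lia) hj) (hj' ▸ inf_le_right))
  have hM := covBy_bperp_inf_ceiling halt hnd hdim hmj hj (hoff h m le_rfl) hE
    fun hj' => hOpp (j + 2) (by lia) hj' (by lia)
  have hcov : D.space j ⋖ D.space j ⊔ bperp B (C.space (j + 1)) ⊓ D.ceiling j :=
    covBy_sup_of_inf_eq hE hM inf_le_left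
  have hne : bperp B (C.space (j + 1)) ⊓
      (D.space j ⊔ bperp B (C.space (j + 1)) ⊓ D.ceiling j) ≠ C.space m :=
    (hM.lt.trans_le (le_inf inf_le_left le_sup_right)).ne'
  have hle : D.space j ≤ D.ceiling j := (D.space_covBy hj).le.trans (D.space_le_ceiling hj)
  refine ⟨_, ⟨hcov, sup_le hle inf_le_right⟩, fun U hU => ?_⟩
  rw [OppAbove, min_eq_right (by lia)]
  exact inf_eq_iff_ne hE hcov le_sup_right hne hU.1 hU.2

lemma panelMatrix_commute_jucysMurphyProd [Finite F] (hik : i < k) (hk : k ≤ n) :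
    Commute (panelMatrix B n (n - i))
      (jucysMurphyProd (fun i => panelMatrix B n (n - i)) k) := by
  rw [jucysMurphyProd_panelMatrix halt hnd hdim hk, show n - i = n - i - 1 + 1 by lia]
  exact panelMatrix_commute_oppAbove halt hnd hdim (by lia) (by lia)

end Opposition

/-! ### The ratio bound -/

section RatioBound

open Matrix

lemma mulVec_indicator_of_ratio_eq {α : Type*} [Fintype α] {A : Matrix α α ℝ} {U : Set α}
    {k μ : ℝ} (hA : (A + μ • (1 : Matrix α α ℝ)).PosSemidef) (hk : A *ᵥ 1 = k • 1)
    (hU : U.indicator 1 ⬝ᵥ A *ᵥ U.indicator 1 = 0) (hkμ : k + μ ≠ 0)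
    (hratio : U.ncard * (k + μ) = Nat.card α * μ) :
    A *ᵥ U.indicator 1 = μ • (1 - U.indicator 1) := by
  set χ : α → ℝ := U.indicator 1
  have h11 : (1 : α → ℝ) ⬝ᵥ 1 = Nat.card α := by simp [dotProduct]
  have hχ1 : χ ⬝ᵥ 1 = U.ncard := by
    simp [χ, dotProduct, Set.indicator_apply, Set.ncard_eq_toFinset_card']
  have h1χ : 1 ⬝ᵥ χ = U.ncard := by rw [dotProduct_comm, hχ1]
  have hχχ : χ ⬝ᵥ χ = U.ncard := by
    simp [χ, dotProduct, Set.indicator_apply, Set.ncard_eq_toFinset_card', ← ite_and]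
  have hsymm : Aᵀ = A := by
    have := hA.isHermitian
    simpa [IsHermitian, conjTranspose_eq_transpose_of_trivial] using this
  have h1A : 1 ⬝ᵥ A *ᵥ χ = k * U.ncard := by
    rw [dotProduct_mulVec, ← mulVec_transpose, hsymm, hk, smul_dotProduct, h1χ, smul_eq_mul]
  have hker : (A + μ • (1 : Matrix α α ℝ)) *ᵥ ((k + μ) • χ - μ • 1) = 0 := by
    rw [← hA.dotProduct_mulVec_zero_iff, star_trivial]
    simp only [add_mulVec, smul_mulVec, one_mulVec, mulVec_sub, mulVec_smul, hk, sub_dotProduct,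
      smul_dotProduct, dotProduct_add, dotProduct_sub, dotProduct_smul, smul_eq_mul, hU, h1A, hχ1,
      h1χ, h11, hχχ]
    linear_combination (-(k + μ) * μ) * hratio
  simp only [add_mulVec, smul_mulVec, one_mulVec, mulVec_sub, mulVec_smul, hk] at hker
  have : (k + μ) • (A *ᵥ χ - μ • (1 - χ)) = 0 := by
    rw [← hker]
    module
  exact sub_eq_zero.mp ((smul_eq_zero.mp this).resolve_left hkμ)

variable {F V : Type} [Field F] [AddCommGroup V] [Module F V]
  {B : V →ₗ[F] V →ₗ[F] F} {n : ℕ} [FiniteDimensional F V]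

lemma FlagOpp.symm (halt : IsAltForm B) (hnd : NondegForm B) {C D : Chamber B n}
    (h : FlagOpp C D) : FlagOpp D C := fun i hi => by
  have hin := (Finset.mem_Icc.mp hi).2
  have := finrank_bperp_inf_add_finrank halt hnd (X := C.space i) (Y := D.space i)
  rw [h i hi, finrank_bot, C.finrank_space hin, D.finrank_space hin] at this
  exact Submodule.finrank_eq_zero.mp (by lia)

variable [Finite F] (halt : IsAltForm B) (hnd : NondegForm B) (hdim : finrank F V = 2 * n)
include halt hnd hdim

theorem posSemidef_relMatrix_flagOpp :
    (relMatrix (FlagOpp (B := B) (J := Finset.Icc 1 n)) +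
      (Nat.card F : ℝ) ^ (n * (n - 1)) • 1).PosSemidef := by
  have : Finite V := Module.finite_of_finite F
  have : Fintype (Chamber B n) := Fintype.ofFinite _
  have hq : (1 : ℝ) < Nat.card F := mod_cast Finite.one_lt_card
  let φ := toLpLinAlgEquiv (n := Chamber B n) (R := ℝ) 2
  let t : ℕ → Module.End ℝ (EuclideanSpace ℝ (Chamber B n)) := fun i => φ (panelMatrix B n (n - i))
  have hmap (k) : φ (jucysMurphyProd (fun i => panelMatrix B n (n - i)) k) = jucysMurphyProd t k :=
    map_jucysMurphyProd φ _ k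
  have hsymm (M : Matrix (Chamber B n) (Chamber B n) ℝ) (hM : Mᵀ = M) : (φ M).IsSymmetric :=
    isSymmetric_toEuclideanLin_iff.mpr (by
      rw [IsHermitian, conjTranspose_eq_transpose_of_trivial, hM])
  rw [← isPositive_toEuclideanLin_iff, LinearMap.isPositive_iff]
  refine ⟨hsymm _ ?_, fun f => ?_⟩
  · rw [transpose_add, transpose_smul, transpose_one,
      relMatrix_transpose fun _ _ h => h.symm halt hnd]
  have key := inner_jucysMurphyProd_nonneg (t := t) (n := n) hq
    (fun i _ => hsymm _ (panelMatrix_transpose _)) (fun i hi => ?_) (fun i j hij hj => ?_)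
    (fun k hk i hik => ?_) f
  · rw [← hmap, jucysMurphyProd_panelMatrix_eq_flagOpp halt hnd hdim, ← map_one φ, ← map_smul,
      ← map_add, real_inner_comm] at key
    exact key
  · have := (isHecke_panelMatrix halt hnd hdim (j := n - i - 1) (by lia)).map φ
    rwa [show n - i - 1 + 1 = n - i by lia] at this
  · have := panelMatrix_commute (n := n) halt (i := n - j - 1) (j := n - i - 1) (by lia) (by lia)
    rw [show n - i - 1 + 1 = n - i by lia, show n - j - 1 + 1 = n - j by lia] at this
    exact (this.map φ).symm
  · rw [← hmap]
    exact (panelMatrix_commute_jucysMurphyProd halt hnd hdim hik hk).map φ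

end RatioBound

/-! ### Ratio-sharp EKR-sets -/

section RatioSharp

lemma sum_range_two_mul_add_one (n : ℕ) : ∑ i ∈ Finset.range n, (2 * i + 1) = n ^ 2 := by
  induction n with
  | zero => rfl
  | succ n ih =>
    rw [Finset.sum_range_succ, ih]
    ring

lemma sum_stepCodim_sub_one {n s : ℕ} (hs : s ≤ n) :
    ∑ r ∈ Finset.range n, (stepCodim n s r - 1) = s * (s - 1) / 2 + (n - s) ^ 2 := by
  obtain ⟨k, rfl⟩ := Nat.exists_eq_add_of_le hs
  rw [Finset.sum_range_add, Nat.add_sub_cancel_left, ← Finset.sum_range_id,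
    ← sum_range_two_mul_add_one, ← Finset.sum_range_reflect, ← Finset.sum_range_reflect _ k]
  congr 1 <;> refine Finset.sum_congr rfl fun r hr => ?_ <;> rw [Finset.mem_range] at hr <;>
    simp only [stepCodim] <;> split_ifs <;> lia

variable {F V : Type} [Field F] [AddCommGroup V] [Module F V]
  {B : V →ₗ[F] V →ₗ[F] F} {n : ℕ} [FiniteDimensional F V]
  [Finite F] (halt : IsAltForm B) (hnd : NondegForm B) (hdim : finrank F V = 2 * n)
include halt hnd hdim

lemma ncard_flagOpp (C : Chamber B n) :
    {D : Chamber B n | FlagOpp C D}.ncard = Nat.card F ^ n ^ 2 := by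
  have := ncard_flagOpp_space_eq halt (S := ⊥) (by simp [IsTotIso]) hnd hdim (by simp) (C := C)
    (inf_bot_eq _)
  rw [finrank_bot, sum_stepCodim_sub_one n.zero_le] at this
  simpa [Chamber.space_zero] using this

variable {𝓕 : Set (Chamber B n)} (hEKR : IsEKRFlags 𝓕)
  (hsharp : 𝓕.ncard * (Nat.card F ^ n + 1) = Nat.card (Chamber B n))
include hEKR hsharp

lemma ncard_flagOpp_of_notMem {C : Chamber B n} (hC : C ∉ 𝓕) :
    {D ∈ 𝓕 | FlagOpp C D}.ncard = Nat.card F ^ (n * (n - 1)) := by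
  have : Finite V := Module.finite_of_finite F
  have : Fintype (Chamber B n) := Fintype.ofFinite _
  have hexp : n ^ 2 = n * (n - 1) + n := by
    cases n
    · rfl
    · rw [Nat.add_sub_cancel]
      ring
  have hA1 : (relMatrix (FlagOpp (B := B) (J := Finset.Icc 1 n))).mulVec 1 =
      (Nat.card F ^ n ^ 2 : ℝ) • 1 := funext fun D => by
    rw [← Set.indicator_univ 1, relMatrix_mulVec_indicator]
    simp [ncard_flagOpp halt hnd hdim D]
  have hU : dotProduct (𝓕.indicator 1) ((relMatrix FlagOpp).mulVec (𝓕.indicator 1)) = 0 := by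
    refine Finset.sum_eq_zero fun D _ => ?_
    rw [relMatrix_mulVec_indicator]
    by_cases hD : D ∈ 𝓕
    · have : {D' ∈ 𝓕 | FlagOpp D D'} = ∅ :=
        Set.eq_empty_of_forall_notMem fun D' hD' => hEKR D hD D' hD'.1 hD'.2
      rw [this, Set.ncard_empty, Nat.cast_zero, mul_zero]
    · rw [Set.indicator_of_notMem hD, zero_mul]
  have hq : (0 : ℝ) < Nat.card F := mod_cast Nat.card_pos
  have := congrFun (mulVec_indicator_of_ratio_eq (posSemidef_relMatrix_flagOpp halt hnd hdim) hA1 hU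
    (by positivity) (by
      rw [← hsharp, hexp, pow_add]
      push_cast
      ring)) C
  rw [relMatrix_mulVec_indicator, Pi.smul_apply, Pi.sub_apply, Set.indicator_of_notMem hC,
    Pi.one_apply, sub_zero, smul_eq_mul, mul_one] at this
  exact_mod_cast this

variable {S : Submodule F V} (hS : IsTotIso B S) (hs : finrank F S ≤ n)
include hS hs

theorem ncard_opposite_mul_eq :
    {C ∈ 𝓕 | S ⊓ bperp B (C.space (finrank F S)) = ⊥}.ncard *
        Nat.card F ^ ∑ r ∈ Finset.range n, (stepCodim n (finrank F S) r - 1) =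
      ({C : Chamber B n | C.space (finrank F S) = S} \ 𝓕).ncard * Nat.card F ^ (n * (n - 1)) := by
  have : Finite V := Module.finite_of_finite F
  have : Fintype (Chamber B n) := Fintype.ofFinite _
  rw [Set.ncard_eq_toFinset_card', Set.ncard_eq_toFinset_card']
  refine Finset.card_mul_eq_card_mul FlagOpp (fun C hC => ?_) fun D hD => ?_
  · obtain ⟨hC, hSC⟩ := Set.mem_toFinset.mp hC
    rw [← ncard_flagOpp_space_eq halt hS hnd hdim hs (inf_comm S _ ▸ hSC),
      Set.ncard_eq_toFinset_card']
    congr 1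
    ext D
    simp only [Finset.mem_bipartiteAbove, Set.mem_toFinset, Set.mem_sdiff, Set.mem_ofPred_eq]
    exact ⟨fun h => ⟨h.1.1, h.2⟩, fun h => ⟨⟨h.1, fun hD => hEKR C hC D hD h.2⟩, h.2⟩⟩
  · obtain ⟨hDS, hD⟩ := Set.mem_toFinset.mp hD
    rw [← ncard_flagOpp_of_notMem halt hnd hdim hEKR hsharp hD, Set.ncard_eq_toFinset_card']
    congr 1
    ext C
    simp only [Finset.mem_bipartiteBelow, Set.mem_toFinset, Set.mem_ofPred_eq]
    refine ⟨fun h => ⟨h.1.1, h.2.symm halt hnd⟩, fun h => ⟨⟨h.1, ?_⟩, h.2.symm halt hnd⟩⟩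
    have hCD := Chamber.flagOpp_iff.mp (h.2.symm halt hnd) _ hs
    rwa [hDS, inf_comm] at hCD

theorem pow_le_ncard_space_eq_diff (hlight : ¬ Heavy 𝓕 (finrank F S) S) :
    Nat.card F ^ ∑ r ∈ Finset.range n, (stepCodim n (finrank F S) r - 1) ≤
      ({C : Chamber B n | C.space (finrank F S) = S} \ 𝓕).ncard := by
  have : Finite V := Module.finite_of_finite F
  obtain ⟨C, hCS, hC⟩ : ∃ C : Chamber B n, C.space (finrank F S) = S ∧ C ∉ 𝓕 := by
    simpa [Heavy] using hlight
  obtain ⟨D, hD, hCD⟩ : {D ∈ 𝓕 | FlagOpp C D}.Nonempty := by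
    rw [← Set.ncard_pos, ncard_flagOpp_of_notMem halt hnd hdim hEKR hsharp hC]
    exact pow_pos Nat.card_pos _
  have hDC := hCD.symm halt hnd
  rw [← ncard_flagOpp_space_eq halt hS hnd hdim hs (hCS ▸ Chamber.flagOpp_iff.mp hDC _ hs)]
  exact Set.ncard_le_ncard fun E hE => ⟨hE.1, fun hE' => hEKR D hD E hE' hE.2⟩

end RatioSharp

/-! ### Chamber counts in closed form -/

section ClosedForm

variable {q n s : ℕ}

lemma prod_range_sub_eq_prod_Icc {M : Type*} [CommMonoid M] (f : ℕ → M) (k : ℕ) :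
    ∏ r ∈ Finset.range k, f (k - r) = ∏ i ∈ Finset.Icc 1 k, f i :=
  Finset.prod_nbij' (k - ·) (k - ·) (by grind) (by grind) (by grind) (by grind) (by grind)

lemma PhiP_self_right (hq : 1 < q) :
    PhiP q n s n = ∏ i ∈ Finset.Icc 1 (n - s), ((q : ℝ) ^ i + 1) := by
  have hq' : (1 : ℝ) < q := mod_cast hq
  have hgauss : gaussq q (n - s) (n - s) = 1 := Finset.prod_eq_one fun i hi => by
    have := one_lt_pow₀ hq' (Nat.one_le_iff_ne_zero.mp (Finset.mem_Icc.mp hi).1)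
    rw [Nat.sub_self, zero_add, div_self (by linarith)]
  rw [PhiP, hgauss, one_mul]
  exact Finset.prod_nbij' (n - s + 1 - ·) (n - s + 1 - ·) (by grind) (by grind) (by grind)
    (by grind) (by grind)

lemma prod_stepCodim_eq_zpol_mul_PhiP (hq : 1 < q) (hs : s ≤ n) :
    ∏ r ∈ Finset.range n, ∑ i ∈ Finset.range (stepCodim n s r), (q : ℝ) ^ i =
      zpol q s * zpol q (n - s) * PhiP q n s n := by
  have hq' : (q : ℝ) ≠ 1 := mod_cast hq.ne'
  obtain ⟨k, rfl⟩ := Nat.exists_eq_add_of_le hs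
  rw [PhiP_self_right hq, Finset.prod_range_add, mul_assoc, Nat.add_sub_cancel_left, zpol, zpol,
    ← Finset.prod_mul_distrib, ← prod_range_sub_eq_prod_Icc, ← prod_range_sub_eq_prod_Icc]
  congr 1 <;> refine Finset.prod_congr rfl fun r hr => ?_ <;> rw [geom_sum_eq hq', stepCodim]
  · rw [if_pos (Finset.mem_range.mp hr)]
  · rw [if_neg (by lia), show 2 * (s + k - (s + r)) = (k - r) + (k - r) by lia, pow_add]
    ring

lemma PhiP_zero_eq (hq : 1 < q) (hn : 1 ≤ n) :
    PhiP q n 0 n = PhiP q n 1 n * (q ^ n + 1) := by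
  obtain ⟨k, rfl⟩ := Nat.exists_eq_add_of_le' hn
  rw [PhiP_self_right hq, PhiP_self_right hq, Nat.sub_zero, Nat.add_sub_cancel,
    Finset.prod_Icc_succ_top k.succ_pos]

lemma mul_pred_eq_exponent_add (hs : 1 ≤ s) (hsn : s ≤ n) :
    n * (n - 1) = 2 * n * s - s * (3 * s - 1) / 2 - n + (s * (s - 1) / 2 + (n - s) ^ 2) := by
  obtain ⟨k, rfl⟩ := Nat.exists_eq_add_of_le hsn
  obtain ⟨t, rfl⟩ := Nat.exists_eq_add_of_le' hs
  obtain ⟨a, ha⟩ := Nat.even_mul_succ_self t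
  have h_half : (t + 1) * (t + 1 - 1) / 2 = a := by
    rw [Nat.add_sub_cancel, mul_comm]
    lia
  have h_threeHalves : (t + 1) * (3 * (t + 1) - 1) / 2 = 3 * a + t + 1 := by
    rw [show 3 * (t + 1) - 1 = 3 * t + 2 by lia]
    have : (t + 1) * (3 * t + 2) = 3 * (t * (t + 1)) + 2 * (t + 1) := by ring
    lia
  have h_sub : 2 * (t + 1 + k) * (t + 1) - (3 * a + t + 1) - (t + 1 + k) = a + 2 * k * t + k := by
    have : 2 * (t + 1 + k) * (t + 1) = 2 * (t * (t + 1)) + 2 * (k * t) + 2 * (t + 1 + k) := by ring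
    lia
  rw [h_half, h_threeHalves, h_sub, Nat.add_sub_cancel_left, Nat.add_right_comm, Nat.add_sub_cancel]
  linarith

variable {F V : Type} [Field F] [AddCommGroup V] [Module F V]
  {B : V →ₗ[F] V →ₗ[F] F} [FiniteDimensional F V]
  [Finite F] (halt : IsAltForm B) (hnd : NondegForm B) (hdim : finrank F V = 2 * n)
include halt hnd hdim

lemma ncard_space_eq_zpol_mul_PhiP {S : Submodule F V} (hS : IsTotIso B S)
    (hs : finrank F S ≤ n) :
    ({C : Chamber B n | C.space (finrank F S) = S}.ncard : ℝ) =
      zpol (Nat.card F) (finrank F S) * zpol (Nat.card F) (n - finrank F S) *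
        PhiP (Nat.card F) n (finrank F S) n := by
  rw [ncard_space_eq halt hS hnd hdim hs, ← prod_stepCodim_eq_zpol_mul_PhiP Finite.one_lt_card hs]
  push_cast
  rfl

lemma card_chamber (hn : 1 ≤ n) :
    (Nat.card (Chamber B n) : ℝ) =
      PhiP (Nat.card F) n 1 n * zpol (Nat.card F) n * (Nat.card F ^ n + 1) := by
  have := ncard_space_eq_zpol_mul_PhiP (S := ⊥) halt hnd hdim (by simp [IsTotIso]) (by simp)
  simp only [finrank_bot, Chamber.space_zero, Set.ofPred_true, Set.ncard_univ] at this
  have hzpol : zpol (Nat.card F) 0 = 1 := Finset.prod_empty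
  rw [this, PhiP_zero_eq Finite.one_lt_card hn, Nat.sub_zero, hzpol]
  ring

end ClosedForm

section Main

variable {F V : Type} [Field F] [AddCommGroup V] [Module F V] {B : V →ₗ[F] V →ₗ[F] F} {n s : ℕ}
  {S : Submodule F V} {𝓕 : Set (Chamber B n)}

lemma ncard_eq_add_ncard_opposite_add [Finite V] (hS : IsTotIso B S) (hS_ne : S ≠ ⊥) :
    𝓕.ncard = {C ∈ 𝓕 | C.space s = S}.ncard + {C ∈ 𝓕 | S ⊓ bperp B (C.space s) = ⊥}.ncard +
      {C ∈ 𝓕 | C.space s ≠ S ∧ S ⊓ bperp B (C.space s) ≠ ⊥}.ncard := by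
  have hdisj : Disjoint {C ∈ 𝓕 | C.space s = S} {C ∈ 𝓕 | S ⊓ bperp B (C.space s) = ⊥} := by
    refine Set.disjoint_left.mpr ?_
    rintro C ⟨-, rfl⟩ ⟨-, hC⟩
    exact hS_ne (inf_eq_left.mpr (isTotIso_iff_le_bperp.mp hS) ▸ hC)
  have hunion : {C ∈ 𝓕 | C.space s = S} ∪ {C ∈ 𝓕 | S ⊓ bperp B (C.space s) = ⊥} =
      {C ∈ 𝓕 | C.space s = S ∨ S ⊓ bperp B (C.space s) = ⊥} := by
    ext C
    simp only [Set.mem_union, Set.mem_ofPred_eq, and_or_left]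
  rw [← Set.ncard_union_eq hdisj, hunion]
  simp only [ne_eq, ← not_or]
  exact (Set.ncard_inter_add_ncard_sdiff_eq_ncard 𝓕 {C | _}).symm

section Counts

variable [FiniteDimensional F V] [Finite F] (halt : IsAltForm B) (hnd : NondegForm B)
  (hdim : finrank F V = 2 * n)
include halt hnd hdim

lemma ncard_mem_space_eq (hS : IsTotIso B S) (hs : finrank F S ≤ n) :
    ({C ∈ 𝓕 | C.space (finrank F S) = S}.ncard : ℝ) =
      zpol (Nat.card F) (finrank F S) * zpol (Nat.card F) (n - finrank F S) *
          PhiP (Nat.card F) n (finrank F S) n -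
        ({C : Chamber B n | C.space (finrank F S) = S} \ 𝓕).ncard := by
  have : Finite V := Module.finite_of_finite F
  rw [← ncard_space_eq_zpol_mul_PhiP halt hnd hdim hS hs, eq_sub_iff_add_eq, ← Nat.cast_add,
    ← Set.ncard_inter_add_ncard_sdiff_eq_ncard {C : Chamber B n | C.space (finrank F S) = S} 𝓕,
    Set.inter_comm]
  rfl

lemma ncard_ratioSharp (hn : 1 ≤ n)
    (hsharp : 𝓕.ncard * (Nat.card F ^ n + 1) = Nat.card (Chamber B n)) :
    (𝓕.ncard : ℝ) = PhiP (Nat.card F) n 1 n * zpol (Nat.card F) n := by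
  have hpos : (Nat.card F ^ n + 1 : ℝ) ≠ 0 := by positivity
  rw [← mul_left_inj' hpos, ← card_chamber halt hnd hdim hn, ← hsharp]
  push_cast
  rfl

variable (hEKR : IsEKRFlags 𝓕)
  (hsharp : 𝓕.ncard * (Nat.card F ^ n + 1) = Nat.card (Chamber B n)) (hS : IsTotIso B S)
  (hs : finrank F S ∈ Finset.Icc 1 n)
include hEKR hsharp hS hs

lemma ncard_mem_opposite_eq :
    ({C ∈ 𝓕 | S ⊓ bperp B (C.space (finrank F S)) = ⊥}.ncard : ℝ) =
      Nat.card F ^ (2 * n * finrank F S - finrank F S * (3 * finrank F S - 1) / 2 - n) *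
        ({C : Chamber B n | C.space (finrank F S) = S} \ 𝓕).ncard := by
  obtain ⟨hs1, hsn⟩ := Finset.mem_Icc.mp hs
  have hcount := ncard_opposite_mul_eq halt hnd hdim hEKR hsharp hS hsn
  rw [mul_pred_eq_exponent_add hs1 hsn, ← sum_stepCodim_sub_one hsn, pow_add, ← mul_assoc]
    at hcount
  rw [mul_comm]
  exact_mod_cast Nat.eq_of_mul_eq_mul_right (pow_pos Nat.card_pos _) hcount

lemma ncard_mem_ne_not_opposite_eq :
    ({C ∈ 𝓕 | C.space (finrank F S) ≠ S ∧ S ⊓ bperp B (C.space (finrank F S)) ≠ ⊥}.ncard : ℝ) =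
      PhiP (Nat.card F) n 1 n * zpol (Nat.card F) n -
          zpol (Nat.card F) (finrank F S) * zpol (Nat.card F) (n - finrank F S) *
            PhiP (Nat.card F) n (finrank F S) n -
        (Nat.card F ^ (2 * n * finrank F S - finrank F S * (3 * finrank F S - 1) / 2 - n) - 1) *
          ({C : Chamber B n | C.space (finrank F S) = S} \ 𝓕).ncard := by
  have : Finite V := Module.finite_of_finite F
  obtain ⟨hs1, hsn⟩ := Finset.mem_Icc.mp hs
  have hS_ne : S ≠ ⊥ := Submodule.one_le_finrank_iff.mp hs1
  have hpartition := ncard_eq_add_ncard_opposite_add (𝓕 := 𝓕) (s := finrank F S) hS hS_ne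
  rw [← Nat.cast_inj (R := ℝ), ncard_ratioSharp halt hnd hdim (hs1.trans hsn) hsharp, Nat.cast_add,
    Nat.cast_add, ncard_mem_space_eq halt hnd hdim hS hsn,
    ncard_mem_opposite_eq halt hnd hdim hEKR hsharp hS hs] at hpartition
  linear_combination -hpartition

end Counts

end Main

theorem stmt_6_general {F V : Type} [Field F] [Fintype F] [AddCommGroup V] [Module F V]
    [FiniteDimensional F V] (n q : ℕ) (hq : Fintype.card F = q)
    (B : V →ₗ[F] V →ₗ[F] F) (halt : IsAltForm B) (hnd : NondegForm B)
    (hdim : Module.finrank F V = 2 * n)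
    (𝓕 : Set (SFlag B (Finset.Icc 1 n))) (hEKR : IsEKRFlags 𝓕)
    (hsharp : (𝓕.ncard : ℝ) =
      (Nat.card (SFlag B (Finset.Icc 1 n)) : ℝ) / ((q : ℝ) ^ n + 1))
    (s : ℕ) (hs : s ∈ Finset.Icc 1 n)
    (S : Submodule F V) (hSiso : IsTotIso B S) (hSrank : Module.finrank F S = s) :
    (({C ∈ 𝓕 | S ⊓ bperp B (SFlag.space C s) = ⊥}.ncard : ℝ) =
        (q : ℝ) ^ (2 * n * s - s * (3 * s - 1) / 2 - n) *
          (zpol q s * zpol q (n - s) * PhiP q n s n -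
            ({C ∈ 𝓕 | SFlag.space C s = S}.ncard : ℝ)))
    ∧
    (Heavy 𝓕 s S →
      ({C ∈ 𝓕 | SFlag.space C s = S}.ncard : ℝ) =
          zpol q s * zpol q (n - s) * PhiP q n s n ∧
      ({C ∈ 𝓕 | SFlag.space C s ≠ S ∧ S ⊓ bperp B (SFlag.space C s) ≠ ⊥}.ncard : ℝ) =
          PhiP q n 1 n * zpol q n - zpol q s * zpol q (n - s) * PhiP q n s n)
    ∧
    (¬ Heavy 𝓕 s S →
      ({C ∈ 𝓕 | SFlag.space C s = S}.ncard : ℝ) ≤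
          zpol q s * zpol q (n - s) * PhiP q n s n -
            (q : ℝ) ^ (s * (s - 1) / 2 + (n - s) ^ 2) ∧
      ({C ∈ 𝓕 | SFlag.space C s ≠ S ∧ S ⊓ bperp B (SFlag.space C s) ≠ ⊥}.ncard : ℝ) ≤
          PhiP q n 1 n * zpol q n - zpol q s * zpol q (n - s) * PhiP q n s n -
            ((q : ℝ) ^ (2 * n * s - s * (3 * s - 1) / 2 - n) - 1) *
              (q : ℝ) ^ (s * (s - 1) / 2 + (n - s) ^ 2)) := by
  obtain rfl : Nat.card F = q := Nat.card_eq_fintype_card.trans hq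
  subst hSrank
  have hsn := (Finset.mem_Icc.mp hs).2
  have hsharp' : 𝓕.ncard * (Nat.card F ^ n + 1) = Nat.card (Chamber B n) := by
    rw [eq_div_iff (by positivity)] at hsharp
    exact_mod_cast hsharp
  rw [ncard_mem_space_eq halt hnd hdim hSiso hsn,
    ncard_mem_opposite_eq halt hnd hdim hEKR hsharp' hSiso hs,
    ncard_mem_ne_not_opposite_eq halt hnd hdim hEKR hsharp' hSiso hs, sub_sub_cancel]
  refine ⟨rfl, fun hheavy => ?_, fun hlight => ?_⟩
  · have hmissing : {C : Chamber B n | C.space (finrank F S) = S} \ 𝓕 = ∅ :=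
      Set.sdiff_eq_empty.mpr hheavy
    rw [hmissing, Set.ncard_empty, Nat.cast_zero, mul_zero, sub_zero, sub_zero]
    exact ⟨rfl, rfl⟩
  · have hq : (1 : ℝ) ≤ Nat.card F := mod_cast Nat.card_pos
    have hmissing := pow_le_ncard_space_eq_diff halt hnd hdim hEKR hsharp' hSiso hsn hlight
    rw [sum_stepCodim_sub_one hsn, ← Nat.cast_le (α := ℝ), Nat.cast_pow] at hmissing
    exact ⟨sub_le_sub_left hmissing _, sub_le_sub_left
      (mul_le_mul_of_nonneg_left hmissing (sub_nonneg.mpr (one_le_pow₀ hq))) _⟩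

/-- counts `X`, `Y`, `Z` of chambers of a ratio-sharp EKR-set relative
to a fixed totally isotropic `s`-space `S`. -/
theorem stmt_6 {F V : Type} [Field F] [Fintype F] [AddCommGroup V] [Module F V]
    [FiniteDimensional F V] (n q : ℕ) (hn : 3 ≤ n) (hq : Fintype.card F = q)
    (B : V →ₗ[F] V →ₗ[F] F) (halt : IsAltForm B) (hnd : NondegForm B)
    (hdim : Module.finrank F V = 2 * n)
    (𝓕 : Set (SFlag B (Finset.Icc 1 n))) (hEKR : IsEKRFlags 𝓕)
    (hsharp : (𝓕.ncard : ℝ) =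
      (Nat.card (SFlag B (Finset.Icc 1 n)) : ℝ) / ((q : ℝ) ^ n + 1))
    (s : ℕ) (hs : s ∈ Finset.Icc 1 n)
    (S : Submodule F V) (hSiso : IsTotIso B S) (hSrank : Module.finrank F S = s) :
    -- (a)
    (({C ∈ 𝓕 | S ⊓ bperp B (SFlag.space C s) = ⊥}.ncard : ℝ) =
        (q : ℝ) ^ (2 * n * s - s * (3 * s - 1) / 2 - n) *
          (zpol q s * zpol q (n - s) * PhiP q n s n -
            ({C ∈ 𝓕 | SFlag.space C s = S}.ncard : ℝ)))
    ∧
    -- (b)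
    (Heavy 𝓕 s S →
      ({C ∈ 𝓕 | SFlag.space C s = S}.ncard : ℝ) =
          zpol q s * zpol q (n - s) * PhiP q n s n ∧
      ({C ∈ 𝓕 | SFlag.space C s ≠ S ∧ S ⊓ bperp B (SFlag.space C s) ≠ ⊥}.ncard : ℝ) =
          PhiP q n 1 n * zpol q n - zpol q s * zpol q (n - s) * PhiP q n s n)
    ∧
    -- (c)
    (¬ Heavy 𝓕 s S →
      ({C ∈ 𝓕 | SFlag.space C s = S}.ncard : ℝ) ≤
          zpol q s * zpol q (n - s) * PhiP q n s n -
            (q : ℝ) ^ (s * (s - 1) / 2 + (n - s) ^ 2) ∧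
      ({C ∈ 𝓕 | SFlag.space C s ≠ S ∧ S ⊓ bperp B (SFlag.space C s) ≠ ⊥}.ncard : ℝ) ≤
          PhiP q n 1 n * zpol q n - zpol q s * zpol q (n - s) * PhiP q n s n -
            ((q : ℝ) ^ (2 * n * s - s * (3 * s - 1) / 2 - n) - 1) *
              (q : ℝ) ^ (s * (s - 1) / 2 + (n - s) ^ 2)) :=
  stmt_6_general n q hq B halt hnd hdim 𝓕 hEKR hsharp s hs S hSiso hSrank
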